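/- arXiv:2403.13172 — 4 statements merged into one kernel-verified Lean document; each statement's English description precedes it below -/
import Mathlib

section
/- Let G be a tree on n vertices with maximum degree Δ ≥ 3. Then the identification number of G satisfies γ^ID(G) ≤ ((Δ−1)/Δ)·n + 1/Δ. -/
open SimpleGraph

/-- The closed neighborhood `N[v]` of a vertex `v` in `G`. -/
def closedNbhd {V : Type*} (G : SimpleGraph V) (v : V) : Set V :=
  insert v (G.neighborSet v)

/-- `C` is an identifying code of `G`: it dominates every vertex and the
closed neighborhoods of distinct vertices intersect `C` differently. -/
def IsIDCode {V : Type*} (G : SimpleGraph V) (C : Set V) : Prop :=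
  (∀ v, (closedNbhd G v ∩ C).Nonempty) ∧
  ∀ u w : V, u ≠ w → closedNbhd G u ∩ C ≠ closedNbhd G w ∩ C

/-- The identification number `γ^ID(G)`: the minimum size of an identifying code. -/
noncomputable def idNum {V : Type*} [Fintype V] (G : SimpleGraph V) : ℕ :=
  sInf {k | ∃ C : Set V, C.ncard = k ∧ IsIDCode G C}

/-- `G` is identifiable (closed-twin-free). -/
def Identifiable {V : Type*} (G : SimpleGraph V) : Prop :=
  ∀ u w : V, u ≠ w → closedNbhd G u ≠ closedNbhd G w

/-- The maximum degree of a finite graph `G`. -/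
noncomputable def maxDeg {V : Type*} [Fintype V] (G : SimpleGraph V) : ℕ :=
  Finset.univ.sup fun v => (G.neighborSet v).ncard

/-- `S` is a dominating set of `G`. -/
def IsDomSet {V : Type*} (G : SimpleGraph V) (S : Set V) : Prop :=
  ∀ v, (closedNbhd G v ∩ S).Nonempty

/-- The domination number `γ(G)`. -/
noncomputable def domNum {V : Type*} [Fintype V] (G : SimpleGraph V) : ℕ :=
  sInf {k | ∃ S : Set V, S.ncard = k ∧ IsDomSet G S}

/-- The star `K_{1,k}`: vertex `0` is adjacent to each of the `k` other vertices. -/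
def starGraph (k : ℕ) : SimpleGraph (Fin (k + 1)) :=
  SimpleGraph.fromRel fun a _ => a = 0

/-- The graph obtained from `G'` by appending a star with `k` extra leaves onto the
vertex `v`: we add a new universal vertex `u = Sum.inr none` adjacent to `v`,
and `k` new leaves `Sum.inr (some i)` adjacent to `u` (so the star has `k + 1`
leaves in total, one of which is identified with `v`, i.e. a `(k+1)`-star is
appended by one of its leaves onto `v`). -/
def appendStar {V : Type*} (G' : SimpleGraph V) (v : V) (k : ℕ) :
    SimpleGraph (V ⊕ Option (Fin k)) :=
  SimpleGraph.fromRel fun a b =>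
    (∃ x y, a = Sum.inl x ∧ b = Sum.inl y ∧ G'.Adj x y) ∨
    (a = Sum.inl v ∧ b = Sum.inr none) ∨
    (∃ i, a = Sum.inr none ∧ b = Sum.inr (some i))

/-!
Deleting an edge `rt` of a tree splits it into a branch rooted at `r` and a branch rooted at `t`,
and a code of one branch matters to the other only through what it achieves at the root, which is
its `RootState`. Call `(D - 1) * n - D * |C|` the profit of a code `C` on `n` vertices; profits add
up when the branches are joined again. By induction over rooted trees of maximum degree at most
`D`, every branch whose root has degree at most `D - 1` offers at least the states and profits of
one of six small model trees. Joining a leaf of the tree to the rest of it then produces an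
identifying code of profit at least `-1`, which is the claimed bound.
-/

/-- The vertex set of the component of `r`, which is regarded as a tree rooted at `r`. -/
abbrev branch {V : Type*} (G : SimpleGraph V) (r : V) : Set V :=
  (G.connectedComponentMk r).supp

section Bridge

variable {V : Type*} {H : SimpleGraph V} {r t : V}

lemma mem_branch_iff_reachable {v : V} : v ∈ branch H r ↔ H.Reachable v r :=
  ConnectedComponent.eq

lemma mem_branch_self (H : SimpleGraph V) (r : V) : r ∈ branch H r :=
  ConnectedComponent.connectedComponentMk_mem

lemma mem_branch_iff_of_adj {v w : V} (h : H.Adj v w) : v ∈ branch H r ↔ w ∈ branch H r :=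
  ConnectedComponent.mem_supp_congr_adj _ h

lemma disjoint_branch (hrt : ¬ H.Reachable r t) : Disjoint (branch H r) (branch H t) :=
  pairwise_disjoint_supp_connectedComponent H (mt ConnectedComponent.exact hrt)

lemma branch_of_isIsolated (hr : H.IsIsolated r) : branch H r = {r} := by
  ext v
  rw [mem_branch_iff_reachable, reachable_comm, Set.mem_singleton_iff]
  refine ⟨fun ⟨p⟩ ↦ ?_, by rintro rfl; rfl⟩
  cases p with
  | nil => rfl
  | cons h _ => exact absurd h (hr _)

lemma branch_sup_edge : branch (H ⊔ edge r t) r = branch H r ∪ branch H t := by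
  obtain rfl | hrt := eq_or_ne r t
  · simp
  have hadj : (H ⊔ edge r t).Adj r t := by simp [edge_adj, hrt]
  ext v
  simp only [Set.mem_union, mem_branch_iff_reachable]
  constructor
  · rintro ⟨p⟩
    have reaches_r_or_t {u w : V} (p : (H ⊔ edge r t).Walk u w) :
        H.Reachable w r ∨ H.Reachable w t → H.Reachable u r ∨ H.Reachable u t := by
      induction p with
      | nil => exact id
      | cons h _ ih =>
        intro hw
        rcases h with h | h
        · exact (ih hw).imp h.reachable.trans h.reachable.trans
        · rcases (edge_adj ..).1 h with ⟨⟨rfl, rfl⟩ | ⟨rfl, rfl⟩, -⟩ <;> simp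
    exact reaches_r_or_t p (.inl .rfl)
  · rintro (h | h)
    · exact h.mono le_sup_left
    · exact (h.mono le_sup_left).trans hadj.symm.reachable

lemma neighborSet_sup_edge (hrt : r ≠ t) :
    (H ⊔ edge r t).neighborSet r = insert t (H.neighborSet r) := by
  ext v
  simp only [mem_neighborSet, sup_adj, edge_adj, Set.mem_insert_iff]
  grind

lemma neighborSet_sup_edge_of_ne {v : V} (hvr : v ≠ r) (hvt : v ≠ t) :
    (H ⊔ edge r t).neighborSet v = H.neighborSet v := by
  ext v
  simp only [mem_neighborSet, sup_adj, edge_adj]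
  grind

lemma ncard_neighborSet_sup_edge [Finite V] (hrt : ¬ H.Reachable r t) :
    ((H ⊔ edge r t).neighborSet r).ncard = (H.neighborSet r).ncard + 1 := by
  have ht : t ∉ H.neighborSet r := mt Adj.reachable hrt
  rw [neighborSet_sup_edge (by rintro rfl; exact hrt .rfl), Set.ncard_insert_of_notMem ht]

lemma deleteEdges_sup_edge {G : SimpleGraph V} (h : G.Adj r t) :
    G.deleteEdges {s(r, t)} ⊔ edge r t = G :=
  sdiff_sup_cancel ((edge_le_iff _).2 (.inr h))

lemma deleteEdges_lt_of_adj {G : SimpleGraph V} (h : G.Adj r t) :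
    G.deleteEdges {s(r, t)} < G :=
  (deleteEdges_le _).lt_of_ne fun heq ↦ by
    rw [← heq] at h
    simp at h

lemma branch_eq_univ {G : SimpleGraph V} (hG : G.Connected) (r : V) : branch G r = Set.univ :=
  Set.eq_univ_of_forall fun v ↦ mem_branch_iff_reachable.2 (hG.preconnected v r)

end Bridge

theorem acyclic_rooted_induction {V : Type*} [Finite V] {P : SimpleGraph V → V → Prop}
    (isolated : ∀ H r, H.IsIsolated r → P H r)
    (graft : ∀ H r t, ¬ H.Reachable r t → P H r → P H t → P (H ⊔ edge r t) r)
    {G : SimpleGraph V} (hG : G.IsAcyclic) (r : V) : P G r := by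
  induction G using WellFoundedLT.induction generalizing r with
  | ind G ih =>
    by_cases hr : G.IsIsolated r
    · exact isolated G r hr
    obtain ⟨t, hrt⟩ := exists_adj_iff_not_isIsolated.2 hr
    have hlt := deleteEdges_lt_of_adj hrt
    have ih' := ih _ hlt (hG.anti hlt.le)
    rw [← deleteEdges_sup_edge hrt]
    exact graft _ r t (isAcyclic_iff_forall_adj_isBridge.1 hG hrt) (ih' r) (ih' t)

/-- The code word of `v`, the set by which the code `C` identifies `v`. -/
abbrev codeWord {V : Type*} (G : SimpleGraph V) (C : Set V) (v : V) : Set V :=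
  closedNbhd G v ∩ C

/-- The code words of the vertices other than `r` in the branch rooted at `r`. -/
def nonRootWords {V : Type*} (G : SimpleGraph V) (r : V) (C : Set V) : Set (Set V) :=
  codeWord G C '' (branch G r \ {r})

/-- `C` is an identifying code of the branch rooted at `r`, except that nothing is asked of the
code word of `r` itself. -/
structure IsCodeOffRoot {V : Type*} (G : SimpleGraph V) (r : V) (C : Set V) : Prop where
  subset_branch : C ⊆ branch G r
  dominates : ∅ ∉ nonRootWords G r C
  separates : Set.InjOn (codeWord G C) (branch G r \ {r})

section CodeWord

variable {V : Type*} {H : SimpleGraph V} {r t : V} {C C₁ C₂ : Set V}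

lemma mem_codeWord_self {v : V} : v ∈ codeWord H C v ↔ v ∈ C := by
  simp [closedNbhd]

lemma notMem_nonRootWords {X : Set V} {v : V} (hv : v ∈ X) (hvC : v ∉ C) :
    X ∉ nonRootWords H r C := by
  rintro ⟨u, -, rfl⟩
  exact hvC hv.2

lemma isIDCode_of_isCodeOffRoot (hH : H.Connected) (hC : IsCodeOffRoot H r C)
    (hne : (codeWord H C r).Nonempty) (hr : codeWord H C r ∉ nonRootWords H r C) :
    IsIDCode H C := by
  have hbranch : insert r (branch H r \ {r}) = Set.univ := by simp [branch_eq_univ hH]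
  have hinj : Set.InjOn (codeWord H C) Set.univ := by
    rw [← hbranch, Set.injOn_insert (by simp)]
    exact ⟨hC.separates, hr⟩
  refine ⟨fun v ↦ ?_, fun u w huw h ↦ huw (hinj trivial trivial h)⟩
  obtain rfl | hv := eq_or_ne v r
  · exact hne
  · rw [Set.nonempty_iff_ne_empty]
    exact fun h ↦ hC.dominates ⟨v, ⟨branch_eq_univ hH r ▸ trivial, hv⟩, h⟩

lemma codeWord_subset_branch (hC : C ⊆ branch H r) (v : V) : codeWord H C v ⊆ branch H r :=
  Set.inter_subset_right.trans hC

lemma ne_of_mem_branches {v w : V} (hrt : ¬ H.Reachable r t) (hv : v ∈ branch H r)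
    (hw : w ∈ branch H t) : v ≠ w :=
  (disjoint_branch hrt).ne_of_mem hv hw

lemma closedNbhd_subset_branch {v : V} (hv : v ∈ branch H r) : closedNbhd H v ⊆ branch H r := by
  rintro w (rfl | hw)
  · exact hv
  · exact (mem_branch_iff_of_adj hw).1 hv

lemma codeWord_union_left (hrt : ¬ H.Reachable r t) (hC₂ : C₂ ⊆ branch H t) {v : V}
    (hv : v ∈ branch H r) : codeWord H (C₁ ∪ C₂) v = codeWord H C₁ v := by
  have : Disjoint (closedNbhd H v) C₂ :=
    (disjoint_branch hrt).mono (closedNbhd_subset_branch hv) hC₂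
  rw [codeWord, Set.inter_union_distrib_left, this.inter_eq, Set.union_empty]

lemma codeWord_sup_edge_of_ne (hrt : ¬ H.Reachable r t) (hC₂ : C₂ ⊆ branch H t) {v : V}
    (hv : v ∈ branch H r) (hvr : v ≠ r) :
    codeWord (H ⊔ edge r t) (C₁ ∪ C₂) v = codeWord H C₁ v := by
  have hvt : v ≠ t := ne_of_mem_branches hrt hv (mem_branch_self H t)
  rw [← codeWord_union_left hrt hC₂ hv, codeWord, codeWord, closedNbhd, closedNbhd,
    neighborSet_sup_edge_of_ne hvr hvt]

lemma codeWord_sup_edge (hrt : ¬ H.Reachable r t) (hC₂ : C₂ ⊆ branch H t) :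
    codeWord (H ⊔ edge r t) (C₁ ∪ C₂) r = {t} ∩ (C₁ ∪ C₂) ∪ codeWord H C₁ r := by
  have hne : r ≠ t := ne_of_mem_branches hrt (mem_branch_self H r) (mem_branch_self H t)
  rw [← codeWord_union_left hrt hC₂ (mem_branch_self H r), codeWord, codeWord, closedNbhd,
    closedNbhd, neighborSet_sup_edge hne, Set.insert_comm, Set.insert_eq t,
    Set.union_inter_distrib_right]

lemma codeWord_sup_edge_of_mem (hrt : ¬ H.Reachable r t) (hC₂ : C₂ ⊆ branch H t) (ht : t ∈ C₂) :
    codeWord (H ⊔ edge r t) (C₁ ∪ C₂) r = insert t (codeWord H C₁ r) := by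
  rw [codeWord_sup_edge hrt hC₂,
    Set.inter_eq_left.2 (Set.singleton_subset_iff.2 (Set.mem_union_right _ ht)), Set.insert_eq]

lemma codeWord_sup_edge_of_notMem (hrt : ¬ H.Reachable r t) (hC₁ : C₁ ⊆ branch H r)
    (hC₂ : C₂ ⊆ branch H t) (ht : t ∉ C₂) :
    codeWord (H ⊔ edge r t) (C₁ ∪ C₂) r = codeWord H C₁ r := by
  have ht' : t ∉ C₁ ∪ C₂ := by
    rintro (h | h)
    · exact ne_of_mem_branches hrt (hC₁ h) (mem_branch_self H t) rfl
    · exact ht h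
  rw [codeWord_sup_edge hrt hC₂, Set.singleton_inter_eq_empty.2 ht', Set.empty_union]

lemma codeWord_sup_edge_right_of_mem (hrt : ¬ H.Reachable r t) (hC₁ : C₁ ⊆ branch H r)
    (hr : r ∈ C₁) : codeWord (H ⊔ edge r t) (C₁ ∪ C₂) t = insert r (codeWord H C₂ t) := by
  rw [edge_comm, Set.union_comm]
  exact codeWord_sup_edge_of_mem (mt Reachable.symm hrt) hC₁ hr

lemma codeWord_sup_edge_right_of_notMem (hrt : ¬ H.Reachable r t) (hC₁ : C₁ ⊆ branch H r)
    (hC₂ : C₂ ⊆ branch H t) (hr : r ∉ C₁) :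
    codeWord (H ⊔ edge r t) (C₁ ∪ C₂) t = codeWord H C₂ t := by
  rw [edge_comm, Set.union_comm]
  exact codeWord_sup_edge_of_notMem (mt Reachable.symm hrt) hC₂ hC₁ hr

lemma branch_sup_edge_diff_root (hrt : ¬ H.Reachable r t) :
    branch (H ⊔ edge r t) r \ {r} = insert t (branch H r \ {r} ∪ branch H t \ {t}) := by
  have hr := mem_branch_self H r
  have ht := mem_branch_self H t
  have hdisj := disjoint_branch hrt
  rw [branch_sup_edge]
  grind

lemma codeWord_eqOn_left (hrt : ¬ H.Reachable r t) (hC₂ : C₂ ⊆ branch H t) :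
    Set.EqOn (codeWord (H ⊔ edge r t) (C₁ ∪ C₂)) (codeWord H C₁) (branch H r \ {r}) :=
  fun _ hv ↦ codeWord_sup_edge_of_ne hrt hC₂ hv.1 hv.2

lemma codeWord_eqOn_right (hrt : ¬ H.Reachable r t) (hC₁ : C₁ ⊆ branch H r) :
    Set.EqOn (codeWord (H ⊔ edge r t) (C₁ ∪ C₂)) (codeWord H C₂) (branch H t \ {t}) := by
  rw [edge_comm, Set.union_comm]
  exact codeWord_eqOn_left (mt Reachable.symm hrt) hC₁

lemma nonRootWords_sup_edge (hrt : ¬ H.Reachable r t) (hC₁ : C₁ ⊆ branch H r)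
    (hC₂ : C₂ ⊆ branch H t) :
    nonRootWords (H ⊔ edge r t) r (C₁ ∪ C₂) =
      insert (codeWord (H ⊔ edge r t) (C₁ ∪ C₂) t)
        (nonRootWords H r C₁ ∪ nonRootWords H t C₂) := by
  rw [nonRootWords, branch_sup_edge_diff_root hrt, Set.image_insert_eq, Set.image_union,
    (codeWord_eqOn_left hrt hC₂).image_eq, (codeWord_eqOn_right hrt hC₁).image_eq]
  rfl

lemma notMem_nonRootWords_sup_edge (hrt : ¬ H.Reachable r t) (hC₁ : C₁ ⊆ branch H r)
    (hC₂ : C₂ ⊆ branch H t) {X : Set V} :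
    X ∉ nonRootWords (H ⊔ edge r t) r (C₁ ∪ C₂) ↔ X ≠ codeWord (H ⊔ edge r t) (C₁ ∪ C₂) t ∧
      X ∉ nonRootWords H r C₁ ∧ X ∉ nonRootWords H t C₂ := by
  rw [nonRootWords_sup_edge hrt hC₁ hC₂, Set.mem_insert_iff, Set.mem_union, not_or, not_or]

lemma isCodeOffRoot_sup_edge (hrt : ¬ H.Reachable r t) (hC₁ : IsCodeOffRoot H r C₁)
    (hC₂ : IsCodeOffRoot H t C₂) (hne : (codeWord (H ⊔ edge r t) (C₁ ∪ C₂) t).Nonempty)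
    (hr : codeWord (H ⊔ edge r t) (C₁ ∪ C₂) t ∉ nonRootWords H r C₁)
    (ht : codeWord (H ⊔ edge r t) (C₁ ∪ C₂) t ∉ nonRootWords H t C₂) :
    IsCodeOffRoot (H ⊔ edge r t) r (C₁ ∪ C₂) where
  subset_branch := by
    rw [branch_sup_edge]
    exact Set.union_subset_union hC₁.subset_branch hC₂.subset_branch
  dominates := by
    rw [nonRootWords_sup_edge hrt hC₁.subset_branch hC₂.subset_branch]
    rintro (h | h | h)
    · exact hne.ne_empty h.symm
    · exact hC₁.dominates h
    · exact hC₂.dominates h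
  separates := by
    have hdisj := disjoint_branch hrt
    have hl := codeWord_eqOn_left (C₁ := C₁) hrt hC₂.subset_branch
    have hr' := codeWord_eqOn_right (C₂ := C₂) hrt hC₁.subset_branch
    have htr : t ∉ branch H r := Set.disjoint_right.1 hdisj (mem_branch_self H t)
    rw [branch_sup_edge_diff_root hrt, Set.injOn_insert (by simp [htr]),
      Set.injOn_union (hdisj.mono Set.sdiff_subset Set.sdiff_subset), hl.injOn_iff,
      hr'.injOn_iff, Set.image_union, hl.image_eq, hr'.image_eq]
    refine ⟨⟨hC₁.separates, hC₂.separates, fun v hv w hw h ↦ ?_⟩, not_or.2 ⟨hr, ht⟩⟩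
    rw [hl hv, hr' hw] at h
    have hempty : codeWord H C₁ v = ∅ := Set.subset_empty_iff.1 <|
      hdisj (codeWord_subset_branch hC₁.subset_branch v)
        (h.le.trans (codeWord_subset_branch hC₂.subset_branch w))
    exact hC₁.dominates ⟨v, hv, hempty⟩

lemma notMem_of_subset_branch (hrt : ¬ H.Reachable r t) (hC₂ : C₂ ⊆ branch H t) : r ∉ C₂ :=
  fun h ↦ ne_of_mem_branches hrt (mem_branch_self H r) (hC₂ h) rfl

lemma notMem_nonRootWords_of_mem_branch (hrt : ¬ H.Reachable r t) (hC₂ : C₂ ⊆ branch H t)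
    {X : Set V} {v : V} (hvX : v ∈ X) (hv : v ∈ branch H r) : X ∉ nonRootWords H t C₂ :=
  notMem_nonRootWords hvX fun hvC ↦ Set.disjoint_left.1 (disjoint_branch hrt) hv (hC₂ hvC)

end CodeWord

/-- What a partial code of a rooted tree achieves at the root `r`. The flags are promises, so
`true` is the stronger value.

* `outside dominated separated`: `r` is not in the code; the code word of `r` is nonempty, and
  no other vertex has the same code word.
* `inside hasCodeNeighbor singletonFree separated`: `r` is in the code; the code word of `r` is not
  `{r}`, no other vertex has code word `{r}`, and no other vertex has the code word of `r`. -/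
inductive RootState
  | outside (dominated separated : Bool)
  | inside (hasCodeNeighbor singletonFree separated : Bool)

namespace RootState

variable {V : Type*} {H : SimpleGraph V} {r t : V} {C C₁ C₂ : Set V} {σ τ ρ : RootState}

/-- `σ ≤ τ` when `τ` promises at least as much as `σ`. -/
instance : LE RootState where
  le
    | outside n s, outside n' s' => n ≤ n' ∧ s ≤ s'
    | inside h f s, inside h' f' s' => h ≤ h' ∧ f ≤ f' ∧ s ≤ s'
    | _, _ => False

instance : DecidableLE RootState
  | outside .., outside .. => inferInstanceAs (Decidable (_ ∧ _))
  | inside .., inside .. => inferInstanceAs (Decidable (_ ∧ _ ∧ _))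
  | outside .., inside .. | inside .., outside .. => inferInstanceAs (Decidable False)

/-- The promises of `σ` hold for the code `C` at the root `r`. -/
def Holds (H : SimpleGraph V) (r : V) (C : Set V) : RootState → Prop
  | outside n s => r ∉ C ∧ (n → (codeWord H C r).Nonempty) ∧
      (s → codeWord H C r ∉ nonRootWords H r C)
  | inside h f s => r ∈ C ∧ (h → codeWord H C r ≠ {r}) ∧ (f → {r} ∉ nonRootWords H r C) ∧
      (s → codeWord H C r ∉ nonRootWords H r C)

lemma Holds.mono (hτ : τ.Holds H r C) (h : σ ≤ τ) : σ.Holds H r C := by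
  match σ, τ, h with
  | outside .., outside .., ⟨hn, hs⟩ => exact ⟨hτ.1, hτ.2.1 ∘ hn, hτ.2.2 ∘ hs⟩
  | inside .., inside .., ⟨hh, hf, hs⟩ =>
    exact ⟨hτ.1, hτ.2.1 ∘ hh, hτ.2.2.1 ∘ hf, hτ.2.2.2 ∘ hs⟩

/-- `C` is a code of the branch rooted at `r` for which the promises of `σ` hold. -/
structure Realized (σ : RootState) (H : SimpleGraph V) (r : V) (C : Set V) : Prop
    extends IsCodeOffRoot H r C where
  holds : σ.Holds H r C

lemma Realized.mono (hτ : τ.Realized H r C) (h : σ ≤ τ) : σ.Realized H r C :=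
  ⟨hτ.toIsCodeOffRoot, hτ.holds.mono h⟩

/-- The state at the root `r` once an edge joins `r`, in state `σ`, to the root `t` of a disjoint
tree, in state `τ`; it is `none` if the code word of `t` may then fail to identify `t`. -/
def graft : RootState → RootState → Option RootState
  | outside n s, outside true true => some (outside n (s && n))
  | outside n _, inside h f true => some (outside true (n || (h && f)))
  | inside h f s, outside true _ => some (inside h f s)
  | inside h true s, outside false _ => some (inside h false (h && s))
  | inside h f _, inside h' _ _ => some (inside true f (h || h'))
  | _, _ => none

lemma Realized.outside_outside {n s : Bool} (hrt : ¬ H.Reachable r t)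
    (hσ : (outside n s).Realized H r C₁) (hτ : (outside true true).Realized H t C₂) :
    (outside n (s && n)).Realized (H ⊔ edge r t) r (C₁ ∪ C₂) := by
  have htr := mt Reachable.symm hrt
  obtain ⟨hC₁, hr, hn, hs⟩ := hσ
  obtain ⟨hC₂, ht, hn', hs'⟩ := hτ
  have hsub₁ := hC₁.subset_branch
  have hsub₂ := hC₂.subset_branch
  have hX := codeWord_subset_branch hsub₁ r
  have hY := codeWord_subset_branch hsub₂ t
  have hwr := codeWord_sup_edge_of_notMem hrt hsub₁ hsub₂ ht
  have hwt := codeWord_sup_edge_right_of_notMem hrt hsub₁ hsub₂ hr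
  obtain ⟨y, hy⟩ := hn' rfl
  refine ⟨isCodeOffRoot_sup_edge hrt hC₁ hC₂ ?_ ?_ ?_, ?_, hwr ▸ hn, fun hsn ↦ ?_⟩
  · exact hwt ▸ ⟨y, hy⟩
  · exact hwt ▸ notMem_nonRootWords_of_mem_branch htr hsub₁ hy (hY hy)
  · exact hwt ▸ hs' rfl
  · simp [hr, notMem_of_subset_branch hrt hsub₂]
  · rw [notMem_nonRootWords_sup_edge hrt hsub₁ hsub₂, hwr, hwt]
    rw [Bool.and_eq_true] at hsn
    obtain ⟨x, hx⟩ := hn hsn.2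
    exact ⟨fun heq ↦ ne_of_mem_branches hrt (hX hx) (hY (heq ▸ hx)) rfl, hs hsn.1,
      notMem_nonRootWords_of_mem_branch hrt hsub₂ hx (hX hx)⟩

lemma Realized.outside_inside {n s h f : Bool} (hrt : ¬ H.Reachable r t)
    (hσ : (outside n s).Realized H r C₁) (hτ : (inside h f true).Realized H t C₂) :
    (outside true (n || (h && f))).Realized (H ⊔ edge r t) r (C₁ ∪ C₂) := by
  have htr := mt Reachable.symm hrt
  obtain ⟨hC₁, hr, hn, -⟩ := hσ
  obtain ⟨hC₂, ht, hh, hf, hs'⟩ := hτ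
  have hsub₁ := hC₁.subset_branch
  have hsub₂ := hC₂.subset_branch
  have hX := codeWord_subset_branch hsub₁ r
  have hY := codeWord_subset_branch hsub₂ t
  have hwr := codeWord_sup_edge_of_mem (C₁ := C₁) hrt hsub₂ ht
  have hwt := codeWord_sup_edge_right_of_notMem hrt hsub₁ hsub₂ hr
  have htY : t ∈ codeWord H C₂ t := mem_codeWord_self.2 ht
  have htX : insert t (codeWord H C₁ r) ∉ nonRootWords H r C₁ :=
    notMem_nonRootWords_of_mem_branch htr hsub₁ (Set.mem_insert ..) (mem_branch_self H t)
  refine ⟨isCodeOffRoot_sup_edge hrt hC₁ hC₂ ?_ ?_ ?_, ?_, ?_, fun hnhf ↦ ?_⟩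
  · exact hwt ▸ ⟨t, htY⟩
  · exact hwt ▸ notMem_nonRootWords_of_mem_branch htr hsub₁ htY (hY htY)
  · exact hwt ▸ hs' rfl
  · simp [hr, notMem_of_subset_branch hrt hsub₂]
  · exact fun _ ↦ hwr ▸ Set.insert_nonempty ..
  · rw [notMem_nonRootWords_sup_edge hrt hsub₁ hsub₂, hwr, hwt]
    obtain hempty | ⟨x, hx⟩ := (codeWord H C₁ r).eq_empty_or_nonempty
    · obtain hn' | ⟨hh', hf'⟩ : n ∨ h ∧ f := by simpa using hnhf
      · exact absurd hempty (hn hn').ne_empty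
      · rw [hempty, insert_empty_eq] at htX ⊢
        exact ⟨(hh hh').symm, htX, hf hf'⟩
    · have hx' := Set.mem_insert_of_mem t hx
      exact ⟨fun heq ↦ ne_of_mem_branches hrt (hX hx) (hY (heq ▸ hx')) rfl, htX,
        notMem_nonRootWords_of_mem_branch hrt hsub₂ hx' (hX hx)⟩

lemma Realized.inside_dominated {h f s s' : Bool} (hrt : ¬ H.Reachable r t)
    (hσ : (inside h f s).Realized H r C₁) (hτ : (outside true s').Realized H t C₂) :
    (inside h f s).Realized (H ⊔ edge r t) r (C₁ ∪ C₂) := by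
  have htr := mt Reachable.symm hrt
  obtain ⟨hC₁, hr, hh, hf, hs⟩ := hσ
  obtain ⟨hC₂, ht, hn', -⟩ := hτ
  have hsub₁ := hC₁.subset_branch
  have hsub₂ := hC₂.subset_branch
  have hX := codeWord_subset_branch hsub₁ r
  have hY := codeWord_subset_branch hsub₂ t
  have hwr := codeWord_sup_edge_of_notMem hrt hsub₁ hsub₂ ht
  have hwt := codeWord_sup_edge_right_of_mem (C₂ := C₂) hrt hsub₁ hr
  obtain ⟨y, hy⟩ := hn' rfl
  have hne {X : Set V} (hX : X ⊆ branch H r) : X ≠ insert r (codeWord H C₂ t) := fun heq ↦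
    ne_of_mem_branches hrt (hX (heq ▸ Set.mem_insert_of_mem r hy)) (hY hy) rfl
  have hr' {X : Set V} (hrX : r ∈ X) : X ∉ nonRootWords H t C₂ :=
    notMem_nonRootWords_of_mem_branch hrt hsub₂ hrX (mem_branch_self H r)
  refine ⟨isCodeOffRoot_sup_edge hrt hC₁ hC₂ ?_ ?_ ?_, .inl hr, hwr ▸ hh, fun hf' ↦ ?_,
    fun hs' ↦ ?_⟩
  · exact hwt ▸ Set.insert_nonempty ..
  · rw [hwt]
    exact notMem_nonRootWords_of_mem_branch htr hsub₁ (Set.mem_insert_of_mem r hy) (hY hy)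
  · exact hwt ▸ hr' (Set.mem_insert ..)
  · rw [notMem_nonRootWords_sup_edge hrt hsub₁ hsub₂, hwt]
    exact ⟨hne (Set.singleton_subset_iff.2 (mem_branch_self H r)), hf hf', hr' rfl⟩
  · rw [notMem_nonRootWords_sup_edge hrt hsub₁ hsub₂, hwr, hwt]
    exact ⟨hne hX, hs hs', hr' (mem_codeWord_self.2 hr)⟩

lemma Realized.inside_outside {h s n s' : Bool} (hrt : ¬ H.Reachable r t)
    (hσ : (inside h true s).Realized H r C₁) (hτ : (outside n s').Realized H t C₂) :
    (inside h false (h && s)).Realized (H ⊔ edge r t) r (C₁ ∪ C₂) := by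
  have htr := mt Reachable.symm hrt
  obtain ⟨hC₁, hr, hh, hf, hs⟩ := hσ
  obtain ⟨hC₂, ht, -, -⟩ := hτ
  have hsub₁ := hC₁.subset_branch
  have hsub₂ := hC₂.subset_branch
  have hX := codeWord_subset_branch hsub₁ r
  have hY := codeWord_subset_branch hsub₂ t
  have hwr := codeWord_sup_edge_of_notMem hrt hsub₁ hsub₂ ht
  have hwt := codeWord_sup_edge_right_of_mem (C₂ := C₂) hrt hsub₁ hr
  have hr' {X : Set V} (hrX : r ∈ X) : X ∉ nonRootWords H t C₂ :=
    notMem_nonRootWords_of_mem_branch hrt hsub₂ hrX (mem_branch_self H r)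
  refine ⟨isCodeOffRoot_sup_edge hrt hC₁ hC₂ ?_ ?_ ?_, .inl hr, hwr ▸ hh, nofun, fun hs' ↦ ?_⟩
  · exact hwt ▸ Set.insert_nonempty ..
  · rw [hwt]
    obtain hempty | ⟨y, hy⟩ := (codeWord H C₂ t).eq_empty_or_nonempty
    · rw [hempty, insert_empty_eq]
      exact hf rfl
    · exact notMem_nonRootWords_of_mem_branch htr hsub₁ (.inr hy) (hY hy)
  · exact hwt ▸ hr' (Set.mem_insert ..)
  · rw [notMem_nonRootWords_sup_edge hrt hsub₁ hsub₂, hwr, hwt]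
    rw [Bool.and_eq_true] at hs'
    refine ⟨fun heq ↦ hh hs'.1 ?_, hs hs'.2, hr' (mem_codeWord_self.2 hr)⟩
    have hempty : codeWord H C₂ t = ∅ := Set.subset_empty_iff.1 <|
      disjoint_branch hrt (((Set.subset_insert ..).trans heq.ge).trans hX) hY
    rw [heq, hempty, insert_empty_eq]

lemma Realized.inside_inside {h f s h' f' s' : Bool} (hrt : ¬ H.Reachable r t)
    (hσ : (inside h f s).Realized H r C₁) (hτ : (inside h' f' s').Realized H t C₂) :
    (inside true f (h || h')).Realized (H ⊔ edge r t) r (C₁ ∪ C₂) := by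
  have htr := mt Reachable.symm hrt
  obtain ⟨hC₁, hr, hh, hf, -⟩ := hσ
  obtain ⟨hC₂, ht, hh', -, -⟩ := hτ
  have hsub₁ := hC₁.subset_branch
  have hsub₂ := hC₂.subset_branch
  have hX := codeWord_subset_branch hsub₁ r
  have hY := codeWord_subset_branch hsub₂ t
  have hwr := codeWord_sup_edge_of_mem (C₁ := C₁) hrt hsub₂ ht
  have hwt := codeWord_sup_edge_right_of_mem (C₂ := C₂) hrt hsub₁ hr
  have hrX : r ∈ codeWord H C₁ r := mem_codeWord_self.2 hr
  have htY : t ∈ codeWord H C₂ t := mem_codeWord_self.2 ht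
  have hne : t ≠ r := (ne_of_mem_branches hrt (mem_branch_self H r) (mem_branch_self H t)).symm
  have hr' {X : Set V} (hX : r ∈ X) : X ∉ nonRootWords H t C₂ :=
    notMem_nonRootWords_of_mem_branch hrt hsub₂ hX (mem_branch_self H r)
  have ht' {X : Set V} (hX : t ∈ X) : X ∉ nonRootWords H r C₁ :=
    notMem_nonRootWords_of_mem_branch htr hsub₁ hX (mem_branch_self H t)
  refine ⟨isCodeOffRoot_sup_edge hrt hC₁ hC₂ ?_ ?_ ?_, .inl hr, fun _ heq ↦ ?_, fun hf' ↦ ?_,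
    fun hs' ↦ ?_⟩
  · exact hwt ▸ Set.insert_nonempty ..
  · exact hwt ▸ ht' (Set.mem_insert_of_mem r htY)
  · exact hwt ▸ hr' (Set.mem_insert ..)
  · exact hne (heq.le (hwr ▸ Set.mem_insert ..))
  · rw [notMem_nonRootWords_sup_edge hrt hsub₁ hsub₂, hwt]
    exact ⟨fun heq ↦ hne (heq.ge (Set.mem_insert_of_mem r htY)), hf hf', hr' rfl⟩
  · rw [notMem_nonRootWords_sup_edge hrt hsub₁ hsub₂, hwr, hwt]
    refine ⟨fun heq ↦ ?_, ht' (Set.mem_insert ..), hr' (Set.mem_insert_of_mem t hrX)⟩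
    have hX' : codeWord H C₁ r = {r} := Set.eq_singleton_iff_unique_mem.2 ⟨hrX, fun x hx ↦
      (heq.le (.inr hx)).resolve_right fun hxY ↦ ne_of_mem_branches hrt (hX hx) (hY hxY) rfl⟩
    have hY' : codeWord H C₂ t = {t} := Set.eq_singleton_iff_unique_mem.2 ⟨htY, fun y hy ↦
      (heq.ge (.inr hy)).resolve_right fun hyX ↦ ne_of_mem_branches hrt (hX hyX) (hY hy) rfl⟩
    exact (Bool.or_eq_true_iff.1 hs').elim (hh · hX') (hh' · hY')

theorem Realized.graft (hrt : ¬ H.Reachable r t) (hσ : σ.Realized H r C₁)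
    (hτ : τ.Realized H t C₂) (hρ : σ.graft τ = some ρ) :
    ρ.Realized (H ⊔ edge r t) r (C₁ ∪ C₂) := by
  unfold RootState.graft at hρ
  split at hρ <;> cases hρ
  · exact .outside_outside hrt hσ hτ
  · exact .outside_inside hrt hσ hτ
  · exact .inside_dominated hrt hσ hτ
  · exact .inside_outside hrt hσ hτ
  · exact .inside_inside hrt hσ hτ

end RootState

/-- The branch rooted at `r` has a code in state `σ` at the root whose profit is at least `a`. The
profit of a code `C` on `n` vertices is `(D - 1) * n - D * |C|`: a vertex outside the code earns
`D - 1` and a vertex of the code costs `1`. -/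
def Attains {V : Type*} (D : ℤ) (G : SimpleGraph V) (r : V) (σ : RootState) (a : ℤ) : Prop :=
  ∃ C, σ.Realized G r C ∧ a + D * C.ncard ≤ (D - 1) * (branch G r).ncard

theorem Attains.graft {V : Type*} [Finite V] {D : ℤ} {H : SimpleGraph V} {r t : V}
    {σ τ ρ : RootState} {a b c : ℤ} (hσ : Attains D H r σ a) (hrt : ¬ H.Reachable r t)
    (hτ : Attains D H t τ b) (hρ : ∃ ρ' ∈ σ.graft τ, ρ ≤ ρ' := by decide)
    (hc : c ≤ a + b := by omega) : Attains D (H ⊔ edge r t) r ρ c := by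
  obtain ⟨C₁, hC₁, ha⟩ := hσ
  obtain ⟨C₂, hC₂, hb⟩ := hτ
  obtain ⟨ρ', hρ', hle⟩ := hρ
  refine ⟨C₁ ∪ C₂, (hC₁.graft hrt hC₂ hρ').mono hle, ?_⟩
  have hdisj := disjoint_branch hrt
  rw [branch_sup_edge, Set.ncard_union_eq hdisj,
    Set.ncard_union_eq (hdisj.mono hC₁.subset_branch hC₂.subset_branch)]
  push_cast
  linarith

/-- Holds when the branch rooted at `r` attains at least what a single vertex does. Here and in the
following structures each field is named after the vertices that the code of the model tree
omits. -/
structure VertexLike {V : Type*} (D : ℤ) (G : SimpleGraph V) (r : V) : Prop where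
  omitRoot : Attains D G r (.outside false false) (D - 1)
  omitNone : Attains D G r (.inside false true true) (-1)

/-- Modelled on `K₂`. -/
structure EdgeLike {V : Type*} (D : ℤ) (G : SimpleGraph V) (r : V) : Prop where
  omitRoot : Attains D G r (.outside true false) (D - 2)
  omitLeaf : Attains D G r (.inside false false false) (D - 2)
  omitNone : Attains D G r (.inside true true false) (-2)

/-- Modelled on the star with `d` leaves, rooted at its centre. -/
structure StarLike {V : Type*} (D : ℤ) (G : SimpleGraph V) (r : V) (d : ℤ) : Prop where
  omitRoot : Attains D G r (.outside true true) (D - 1 - d)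
  omitLeaf : Attains D G r (.inside true false false) (D - 1 - d)
  omitNone : Attains D G r (.inside true true true) (-1 - d)

/-- Modelled on the path with three vertices, rooted at an end. -/
structure PathLike {V : Type*} (D : ℤ) (G : SimpleGraph V) (r : V) : Prop where
  omitMiddle : Attains D G r (.inside false true true) (D - 3)
  omitEnd : Attains D G r (.inside true true false) (D - 3)
  omitNone : Attains D G r (.inside true true true) (-3)

/-- Modelled on the star with `D` leaves, rooted at a leaf. -/
structure StarLeafLike {V : Type*} (D : ℤ) (G : SimpleGraph V) (r : V) : Prop where
  omitRootCenter : Attains D G r (.outside false false) (D - 1)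
  omitRoot : Attains D G r (.outside true true) (-1)
  omitLeaf : Attains D G r (.inside true true true) (-1)

/-- Modelled on the star with `d` leaves and one edge subdivided, rooted at its centre. -/
structure SpiderLike {V : Type*} (D : ℤ) (G : SimpleGraph V) (r : V) (d : ℤ) : Prop where
  omitTwoLeaves : Attains D G r (.inside true false false) (2 * D - 2 - d)
  omitLeaf : Attains D G r (.inside true true true) (D - 2 - d)

/-- The branch rooted at `r`, a vertex of degree `d`, does at least as well as one of the six
model trees. -/
inductive HasModel {V : Type*} (D : ℤ) (G : SimpleGraph V) (r : V) : ℤ → Prop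
  | vertexLike (h : VertexLike D G r) : HasModel D G r 0
  | edgeLike {d : ℤ} (h : EdgeLike D G r) (hd : 1 ≤ d := by omega) : HasModel D G r d
  | starLike {d : ℤ} (h : StarLike D G r d) (hd : 1 ≤ d := by omega) : HasModel D G r d
  | pathLike {d : ℤ} (h : PathLike D G r) (hd : 1 ≤ d := by omega) : HasModel D G r d
  | starLeafLike {d : ℤ} (h : StarLeafLike D G r) (hd : 1 ≤ d := by omega) : HasModel D G r d
  | spiderLike {d : ℤ} (h : SpiderLike D G r d) (hd : 1 ≤ d := by omega) : HasModel D G r d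

section ModelGraft

variable {V : Type*} [Finite V] {D d e : ℤ} {H : SimpleGraph V} {r t : V}

lemma VertexLike.graft (hD : 3 ≤ D) (heD : e + 1 ≤ D) (x : VertexLike D H r)
    (hrt : ¬ H.Reachable r t) (y : HasModel D H t e) :
    HasModel D (H ⊔ edge r t) r 1 := by
  cases y with
  | vertexLike y =>
    exact .edgeLike ⟨x.omitRoot.graft hrt y.omitNone,
      x.omitNone.graft hrt y.omitRoot,
      x.omitNone.graft hrt y.omitNone⟩
  | edgeLike y =>
    exact .pathLike ⟨x.omitNone.graft hrt y.omitRoot,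
      x.omitNone.graft hrt y.omitLeaf,
      x.omitNone.graft hrt y.omitNone⟩
  | starLike y =>
    exact .starLeafLike ⟨x.omitRoot.graft hrt y.omitRoot,
      x.omitRoot.graft hrt y.omitNone,
      x.omitNone.graft hrt y.omitLeaf⟩
  | pathLike y =>
    exact .starLeafLike ⟨x.omitRoot.graft hrt y.omitMiddle,
      x.omitRoot.graft hrt y.omitNone,
      x.omitNone.graft hrt y.omitEnd⟩
  | starLeafLike y =>
    exact .edgeLike ⟨x.omitRoot.graft hrt y.omitLeaf,
      x.omitNone.graft hrt y.omitRootCenter,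
      x.omitNone.graft hrt y.omitLeaf⟩
  | spiderLike y =>
    exact .edgeLike ⟨x.omitRoot.graft hrt y.omitLeaf,
      x.omitNone.graft hrt y.omitTwoLeaves,
      x.omitNone.graft hrt y.omitTwoLeaves⟩

lemma EdgeLike.graft (hd : 1 ≤ d) (hdD : d + 2 ≤ D) (heD : e + 1 ≤ D) (x : EdgeLike D H r)
    (hrt : ¬ H.Reachable r t) (y : HasModel D H t e) :
    HasModel D (H ⊔ edge r t) r (d + 1) := by
  cases y with
  | vertexLike y =>
    exact .starLike ⟨x.omitRoot.graft hrt y.omitNone,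
      x.omitLeaf.graft hrt y.omitNone,
      x.omitNone.graft hrt y.omitNone⟩
  | edgeLike y =>
    exact .spiderLike ⟨x.omitLeaf.graft hrt y.omitLeaf, x.omitNone.graft hrt y.omitLeaf⟩
  | starLike y =>
    exact .edgeLike ⟨x.omitRoot.graft hrt y.omitRoot,
      x.omitLeaf.graft hrt y.omitRoot,
      x.omitNone.graft hrt y.omitRoot⟩
  | pathLike y =>
    exact .edgeLike ⟨x.omitRoot.graft hrt y.omitMiddle,
      x.omitLeaf.graft hrt y.omitMiddle,
      x.omitNone.graft hrt y.omitMiddle⟩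
  | starLeafLike y =>
    exact .starLike ⟨x.omitRoot.graft hrt y.omitLeaf,
      x.omitLeaf.graft hrt y.omitLeaf,
      x.omitNone.graft hrt y.omitLeaf⟩
  | spiderLike y =>
    exact .starLike ⟨x.omitRoot.graft hrt y.omitLeaf,
      x.omitLeaf.graft hrt y.omitTwoLeaves,
      x.omitNone.graft hrt y.omitTwoLeaves⟩

lemma StarLike.graft (hd : 1 ≤ d) (hdD : d + 2 ≤ D) (heD : e + 1 ≤ D) (x : StarLike D H r d)
    (hrt : ¬ H.Reachable r t) (y : HasModel D H t e) :
    HasModel D (H ⊔ edge r t) r (d + 1) := by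
  cases y with
  | vertexLike y =>
    exact .starLike ⟨x.omitRoot.graft hrt y.omitNone,
      x.omitLeaf.graft hrt y.omitNone,
      x.omitNone.graft hrt y.omitNone⟩
  | edgeLike y =>
    exact .spiderLike ⟨x.omitLeaf.graft hrt y.omitRoot, x.omitNone.graft hrt y.omitRoot⟩
  | starLike y =>
    exact .starLike ⟨x.omitRoot.graft hrt y.omitRoot,
      x.omitLeaf.graft hrt y.omitRoot,
      x.omitNone.graft hrt y.omitRoot⟩
  | pathLike y =>
    exact .edgeLike ⟨x.omitRoot.graft hrt y.omitMiddle,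
      x.omitLeaf.graft hrt y.omitMiddle,
      x.omitNone.graft hrt y.omitMiddle⟩
  | starLeafLike y =>
    exact .starLike ⟨x.omitRoot.graft hrt y.omitRoot,
      x.omitLeaf.graft hrt y.omitRoot,
      x.omitNone.graft hrt y.omitRoot⟩
  | spiderLike y =>
    exact .starLike ⟨x.omitRoot.graft hrt y.omitLeaf,
      x.omitLeaf.graft hrt y.omitTwoLeaves,
      x.omitNone.graft hrt y.omitTwoLeaves⟩

lemma PathLike.graft (hd : 1 ≤ d) (hdD : d + 2 ≤ D) (heD : e + 1 ≤ D) (x : PathLike D H r)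
    (hrt : ¬ H.Reachable r t) (y : HasModel D H t e) :
    HasModel D (H ⊔ edge r t) r (d + 1) := by
  cases y with
  | vertexLike y =>
    exact .spiderLike ⟨x.omitEnd.graft hrt y.omitRoot, x.omitEnd.graft hrt y.omitNone⟩
  | edgeLike y =>
    exact .pathLike ⟨x.omitMiddle.graft hrt y.omitRoot,
      x.omitMiddle.graft hrt y.omitLeaf,
      x.omitMiddle.graft hrt y.omitNone⟩
  | starLike y =>
    exact .pathLike ⟨x.omitMiddle.graft hrt y.omitRoot,
      x.omitMiddle.graft hrt y.omitLeaf,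
      x.omitMiddle.graft hrt y.omitLeaf⟩
  | pathLike y =>
    exact .pathLike ⟨x.omitMiddle.graft hrt y.omitEnd,
      x.omitMiddle.graft hrt y.omitMiddle,
      x.omitMiddle.graft hrt y.omitEnd⟩
  | starLeafLike y =>
    exact .spiderLike ⟨x.omitEnd.graft hrt y.omitRootCenter, x.omitMiddle.graft hrt y.omitLeaf⟩
  | spiderLike y =>
    exact .pathLike ⟨x.omitMiddle.graft hrt y.omitTwoLeaves,
      x.omitMiddle.graft hrt y.omitTwoLeaves,
      x.omitMiddle.graft hrt y.omitTwoLeaves⟩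

lemma StarLeafLike.graft (hd : 1 ≤ d) (hdD : d + 2 ≤ D) (heD : e + 1 ≤ D) (x : StarLeafLike D H r)
    (hrt : ¬ H.Reachable r t) (y : HasModel D H t e) :
    HasModel D (H ⊔ edge r t) r (d + 1) := by
  cases y with
  | vertexLike y =>
    exact .edgeLike ⟨x.omitRootCenter.graft hrt y.omitNone,
      x.omitLeaf.graft hrt y.omitRoot,
      x.omitLeaf.graft hrt y.omitNone⟩
  | edgeLike y =>
    exact .pathLike ⟨x.omitLeaf.graft hrt y.omitRoot,
      x.omitLeaf.graft hrt y.omitRoot,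
      x.omitLeaf.graft hrt y.omitRoot⟩
  | starLike y =>
    exact .starLeafLike ⟨x.omitRootCenter.graft hrt y.omitRoot,
      x.omitRootCenter.graft hrt y.omitNone,
      x.omitLeaf.graft hrt y.omitRoot⟩
  | pathLike y =>
    exact .starLeafLike ⟨x.omitRootCenter.graft hrt y.omitMiddle,
      x.omitRootCenter.graft hrt y.omitNone,
      x.omitLeaf.graft hrt y.omitMiddle⟩
  | starLeafLike y =>
    exact .edgeLike ⟨x.omitRootCenter.graft hrt y.omitLeaf,
      x.omitLeaf.graft hrt y.omitRootCenter,
      x.omitLeaf.graft hrt y.omitRoot⟩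
  | spiderLike y =>
    exact .edgeLike ⟨x.omitRootCenter.graft hrt y.omitLeaf,
      x.omitLeaf.graft hrt y.omitTwoLeaves,
      x.omitLeaf.graft hrt y.omitTwoLeaves⟩

lemma SpiderLike.graft (hd : 1 ≤ d) (hdD : d + 2 ≤ D) (heD : e + 1 ≤ D) (x : SpiderLike D H r d)
    (hrt : ¬ H.Reachable r t) (y : HasModel D H t e) :
    HasModel D (H ⊔ edge r t) r (d + 1) := by
  cases y with
  | vertexLike y =>
    exact .spiderLike ⟨x.omitTwoLeaves.graft hrt y.omitNone, x.omitLeaf.graft hrt y.omitNone⟩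
  | edgeLike y =>
    exact .pathLike ⟨x.omitLeaf.graft hrt y.omitRoot,
      x.omitLeaf.graft hrt y.omitRoot,
      x.omitLeaf.graft hrt y.omitRoot⟩
  | starLike y =>
    exact .spiderLike ⟨x.omitTwoLeaves.graft hrt y.omitRoot, x.omitLeaf.graft hrt y.omitRoot⟩
  | pathLike y =>
    exact .pathLike ⟨x.omitLeaf.graft hrt y.omitMiddle,
      x.omitLeaf.graft hrt y.omitMiddle,
      x.omitLeaf.graft hrt y.omitMiddle⟩
  | starLeafLike y =>
    exact .spiderLike ⟨x.omitTwoLeaves.graft hrt y.omitRoot, x.omitLeaf.graft hrt y.omitRoot⟩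
  | spiderLike y =>
    exact .pathLike ⟨x.omitLeaf.graft hrt y.omitTwoLeaves,
      x.omitLeaf.graft hrt y.omitTwoLeaves,
      x.omitLeaf.graft hrt y.omitTwoLeaves⟩

theorem HasModel.graft (hD : 3 ≤ D) (hdD : d + 2 ≤ D) (heD : e + 1 ≤ D) (x : HasModel D H r d)
    (hrt : ¬ H.Reachable r t) (y : HasModel D H t e) :
    HasModel D (H ⊔ edge r t) r (d + 1) := by
  cases x with
  | vertexLike x => exact x.graft hD heD hrt y
  | edgeLike x hd => exact x.graft hd hdD heD hrt y
  | starLike x hd => exact x.graft hd hdD heD hrt y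
  | pathLike x hd => exact x.graft hd hdD heD hrt y
  | starLeafLike x hd => exact x.graft hd hdD heD hrt y
  | spiderLike x hd => exact x.graft hd hdD heD hrt y

end ModelGraft

lemma VertexLike.of_isIsolated {V : Type*} {D : ℤ} {G : SimpleGraph V} {r : V}
    (hr : G.IsIsolated r) : VertexLike D G r := by
  have hbranch := branch_of_isIsolated hr
  have hwords (C : Set V) : nonRootWords G r C = ∅ := by simp [nonRootWords, hbranch]
  have hcode {C : Set V} (hC : C ⊆ {r}) : IsCodeOffRoot G r C :=
    ⟨hbranch ▸ hC, by simp [hwords], by simp [hbranch]⟩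
  exact ⟨⟨∅, ⟨hcode (Set.empty_subset _), by simp [RootState.Holds]⟩, by simp [hbranch]⟩,
    ⟨{r}, ⟨hcode subset_rfl, by simp [RootState.Holds, hwords]⟩, by simp [hbranch]⟩⟩

theorem HasModel.of_isAcyclic {V : Type*} [Finite V] {D : ℕ} (hD : 3 ≤ D) {G : SimpleGraph V}
    (hG : G.IsAcyclic) (r : V) (hdeg : ∀ v, (G.neighborSet v).ncard ≤ D)
    (hr : (G.neighborSet r).ncard + 1 ≤ D) : HasModel D G r (G.neighborSet r).ncard := by
  revert hdeg hr
  refine acyclic_rooted_induction (P := fun G r ↦ (∀ v, (G.neighborSet v).ncard ≤ D) →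
    (G.neighborSet r).ncard + 1 ≤ D → HasModel D G r (G.neighborSet r).ncard) ?_ ?_ hG r
  · intro H r hiso _ _
    rw [(neighborSet_eq_empty _).2 hiso, Set.ncard_empty]
    exact .vertexLike (.of_isIsolated hiso)
  · intro H r t hrt ihr iht hdeg hr
    have hdeg' (v : V) : (H.neighborSet v).ncard ≤ D :=
      (Set.ncard_le_ncard (neighborSet_mono le_sup_left v)).trans (hdeg v)
    have hdegr := ncard_neighborSet_sup_edge hrt
    have hdegt := ncard_neighborSet_sup_edge (mt Reachable.symm hrt)
    rw [edge_comm] at hdegt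
    have ht := hdeg t
    rw [hdegr, Nat.cast_add_one]
    exact .graft (by omega) (by omega) (by omega) (ihr hdeg' (by omega)) hrt
      (iht hdeg' (by omega))

theorem Attains.exists_isIDCode {V : Type*} [Fintype V] {D a : ℤ} {G : SimpleGraph V} {r : V}
    {σ : RootState} (hG : G.Connected) (h : Attains D G r σ a)
    (hσ : .outside true true ≤ σ ∨ .inside false false true ≤ σ := by decide) :
    ∃ C, IsIDCode G C ∧ a + D * C.ncard ≤ (D - 1) * Fintype.card V := by
  obtain ⟨C, hC, ha⟩ := h
  rw [branch_eq_univ hG, Set.ncard_univ, Nat.card_eq_fintype_card] at ha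
  refine ⟨C, ?_, ha⟩
  obtain hσ | hσ := hσ
  · obtain ⟨-, hne, hsep⟩ := hC.holds.mono hσ
    exact isIDCode_of_isCodeOffRoot hG hC.toIsCodeOffRoot (hne rfl) (hsep rfl)
  · obtain ⟨hr, -, -, hsep⟩ := hC.holds.mono hσ
    exact isIDCode_of_isCodeOffRoot hG hC.toIsCodeOffRoot ⟨r, mem_codeWord_self.2 hr⟩ (hsep rfl)

theorem VertexLike.exists_isIDCode_sup_edge {V : Type*} [Fintype V] {D e : ℤ}
    {H : SimpleGraph V} {r t : V} (hG : (H ⊔ edge r t).Connected) (hD : 3 ≤ D) (heD : e + 1 ≤ D)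
    (he : e ≠ 0) (x : VertexLike D H r) (hrt : ¬ H.Reachable r t) (y : HasModel D H t e) :
    ∃ C, IsIDCode (H ⊔ edge r t) C ∧ -1 + D * C.ncard ≤ (D - 1) * Fintype.card V := by
  cases y with
  | vertexLike y => contradiction
  | edgeLike y =>
    have := x.omitNone.graft hrt y.omitRoot (ρ := .inside false false true) (c := -1)
    exact this.exists_isIDCode hG
  | starLike y =>
    have := x.omitRoot.graft hrt y.omitNone (ρ := .outside true true) (c := -1)
    exact this.exists_isIDCode hG
  | pathLike y =>
    have := x.omitRoot.graft hrt y.omitNone (ρ := .outside true true) (c := -1)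
    exact this.exists_isIDCode hG
  | starLeafLike y =>
    have := x.omitRoot.graft hrt y.omitLeaf (ρ := .outside true true) (c := -1)
    exact this.exists_isIDCode hG
  | spiderLike y =>
    have := x.omitRoot.graft hrt y.omitLeaf (ρ := .outside true true) (c := -1)
    exact this.exists_isIDCode hG

lemma card_eq_two_of_isIsolated {V : Type*} [Fintype V] {H : SimpleGraph V} {r t : V} (hrt : r ≠ t)
    (hG : (H ⊔ edge r t).Connected) (hr : H.IsIsolated r) (ht : H.IsIsolated t) :
    Fintype.card V = 2 := by
  have huniv := branch_eq_univ hG r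
  rw [branch_sup_edge, branch_of_isIsolated hr, branch_of_isIsolated ht] at huniv
  rw [← Nat.card_eq_fintype_card, ← Set.ncard_univ, ← huniv, Set.singleton_union,
    Set.ncard_pair hrt]

theorem exists_isIDCode_of_forall_adj_eq {V : Type*} [Fintype V] {G : SimpleGraph V}
    (hG : G.IsTree) {D : ℕ} (hD : 3 ≤ D) (hdeg : ∀ v, (G.neighborSet v).ncard ≤ D)
    (hcard : Fintype.card V ≠ 2) {r t : V} (hrt : G.Adj r t) (hleaf : ∀ v, G.Adj r v → v = t) :
    ∃ C, IsIDCode G C ∧ -1 + D * (C.ncard : ℤ) ≤ (D - 1) * Fintype.card V := by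
  obtain ⟨H, rfl, hle, hbridge⟩ : ∃ H, H ⊔ edge r t = G ∧ H ≤ G ∧ ¬ H.Reachable r t :=
    ⟨G.deleteEdges {s(r, t)}, deleteEdges_sup_edge hrt, deleteEdges_le _,
      isAcyclic_iff_forall_adj_isBridge.1 hG.isAcyclic hrt⟩
  have hr : H.IsIsolated r := by
    intro v hv
    obtain rfl := hleaf v (hle hv)
    exact hbridge hv.reachable
  have ht : (H.neighborSet t).ncard ≠ 0 := by
    rw [Ne, Set.ncard_eq_zero, neighborSet_eq_empty]
    exact fun ht ↦ hcard (card_eq_two_of_isIsolated hrt.ne hG.connected hr ht)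
  have hdegt := ncard_neighborSet_sup_edge (mt Reachable.symm hbridge)
  rw [edge_comm] at hdegt
  have hdegt_le := hdeg t
  have hdegH (v : V) : (H.neighborSet v).ncard ≤ D :=
    (Set.ncard_le_ncard (neighborSet_mono hle v)).trans (hdeg v)
  have hmodel := HasModel.of_isAcyclic hD (hG.isAcyclic.anti hle) t hdegH (by omega)
  exact (VertexLike.of_isIsolated hr).exists_isIDCode_sup_edge hG.connected (by omega) (by omega)
    (by omega) hbridge hmodel

theorem exists_isIDCode_of_isTree {V : Type*} [Fintype V] {G : SimpleGraph V} (hG : G.IsTree)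
    {D : ℕ} (hD : 3 ≤ D) (hdeg : ∀ v, (G.neighborSet v).ncard ≤ D) (hcard : Fintype.card V ≠ 2) :
    ∃ C, IsIDCode G C ∧ -1 + D * (C.ncard : ℤ) ≤ (D - 1) * Fintype.card V := by
  classical
  obtain _ | _ := subsingleton_or_nontrivial V
  · obtain ⟨r⟩ := hG.connected.nonempty
    have hr : G.IsIsolated r := fun v h ↦ h.ne (Subsingleton.elim r v)
    exact (VertexLike.of_isIsolated hr).omitNone.exists_isIDCode hG.connected
  · obtain ⟨r, hr⟩ := hG.exists_vert_degree_one_of_nontrivial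
    obtain ⟨t, hrt, hleaf⟩ := degree_eq_one_iff_existsUnique_adj.1 hr
    exact exists_isIDCode_of_forall_adj_eq hG hD hdeg hcard hrt hleaf

lemma ncard_neighborSet_le_maxDeg {V : Type*} [Fintype V] (G : SimpleGraph V) (v : V) :
    (G.neighborSet v).ncard ≤ maxDeg G :=
  Finset.le_sup (f := fun v ↦ (G.neighborSet v).ncard) (Finset.mem_univ v)

lemma maxDeg_lt_card {V : Type*} [Fintype V] [Nonempty V] (G : SimpleGraph V) :
    maxDeg G < Fintype.card V := by
  refine (Finset.sup_lt_iff Fintype.card_pos).2 fun v _ ↦ ?_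
  rw [← Nat.card_eq_fintype_card, ← Set.ncard_univ]
  exact Set.ncard_lt_ncard ((Set.ssubset_univ_iff).2 fun h ↦ G.loopless.irrefl v (h.ge trivial))

lemma idNum_le {V : Type*} [Fintype V] {G : SimpleGraph V} {C : Set V} (hC : IsIDCode G C) :
    idNum G ≤ C.ncard :=
  Nat.sInf_le ⟨C, rfl, hC⟩

theorem stmt_0_general {V : Type*} [Fintype V] (G : SimpleGraph V) (hT : G.IsTree)
    (Δ : ℕ) (hΔ : 3 ≤ Δ) (hmax : maxDeg G ≤ Δ) (hcard : Fintype.card V ≠ 2) :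
    (idNum G : ℝ) ≤ ((Δ : ℝ) - 1) / Δ * (Fintype.card V) + 1 / Δ := by
  obtain ⟨C, hC, hprofit⟩ := exists_isIDCode_of_isTree hT hΔ
    (fun v ↦ (ncard_neighborSet_le_maxDeg G v).trans hmax) hcard
  have hidNum : (idNum G : ℝ) ≤ C.ncard := mod_cast idNum_le hC
  have hΔ' : (0 : ℝ) < Δ := by positivity
  have hprofit' : -1 + Δ * (C.ncard : ℝ) ≤ (Δ - 1) * Fintype.card V := mod_cast hprofit
  calc (idNum G : ℝ) ≤ C.ncard := hidNum
    _ ≤ ((Δ - 1) * Fintype.card V + 1) / Δ := by rw [le_div_iff₀ hΔ']; linarith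
    _ = (Δ - 1) / Δ * Fintype.card V + 1 / Δ := by ring

/-- every tree on `n` vertices with maximum degree `Δ ≥ 3` satisfies
`γ^ID(G) ≤ ((Δ−1)/Δ)·n + 1/Δ`. -/
theorem stmt_0 {V : Type*} [Fintype V] (G : SimpleGraph V) (hT : G.IsTree)
    (Δ : ℕ) (hΔ : 3 ≤ Δ) (hmax : maxDeg G = Δ) :
    (idNum G : ℝ) ≤ ((Δ : ℝ) - 1) / Δ * (Fintype.card V) + 1 / Δ := by
  have := hT.connected.nonempty
  have hlt := maxDeg_lt_card G
  exact stmt_0_general G hT Δ hΔ hmax.le (by omega)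
end

section
/- Let G be a tree on n ≥ 23 vertices with maximum degree exactly 3. Then γ^ID(G) ≤ (2/3)·n. -/
open SimpleGraph

/-!
Root the tree at a leaf, so that every vertex has at most two children, and describe a code `C` by
giving each vertex one of seven states: whether it and its parent lie in `C`, and how it is kept
apart from the vertices nearby. Finitely many local conditions between the state of a vertex and
the states of its children force `C` to be identifying, because two vertices that `C` fails to
separate are at distance at most two.

Give each vertex the weight `1` if it lies in `C` and `-2` otherwise; the claim is that some code
has total weight at most `0`. Processing the tree from the leaves to the root, one keeps for every
branch upper bounds on the least weight attainable with each state at its root. Up to weakening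
these bounds, finitely many possibilities arise, and from size `23` on they depend only on the size
modulo `3`, so a finite check suffices.
-/

/-- A rooted forest on `V`, given by parent pointers; the depth function excludes cycles. -/
structure RootedForest (V : Type*) where
  parent : V → Option V
  depth : V → ℕ
  depth_of_parent : ∀ {v p}, parent v = some p → depth v = depth p + 1

namespace RootedForest

variable {V : Type*}

/-- The undirected graph underlying a rooted forest. -/
def graph (F : RootedForest V) : SimpleGraph V where
  Adj u v := F.parent u = some v ∨ F.parent v = some u
  symm := ⟨fun _ _ => Or.symm⟩
  loopless := ⟨fun v h => by have := F.depth_of_parent (or_self_iff.1 h); omega⟩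

theorem mem_closedNbhd_graph {F : RootedForest V} {v z : V} :
    z ∈ closedNbhd F.graph v ↔ z = v ∨ F.parent z = some v ∨ F.parent v = some z := by
  simp only [closedNbhd, Set.mem_insert_iff, mem_neighborSet, graph, or_comm]

theorem exists_graph_eq {G : SimpleGraph V} (hG : G.IsTree) (r : V) :
    ∃ F : RootedForest V, F.graph = G ∧ ∀ v, F.parent v = none ↔ v = r := by
  classical
  choose P hP _ using hG.existsUnique_path r
  have concat {v w} (h : G.Adj v w) (hv : v ∈ (P w).support) : P w = (P v).concat h :=
    hG.isAcyclic.path_concat (hP v) (hP w) h hv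
  have adj_penultimate {v} (hv : v ≠ r) : G.Adj (P v).penultimate v :=
    Walk.adj_penultimate (Walk.not_nil_of_ne hv.symm)
  let F : RootedForest V :=
    { parent := fun v => if v = r then none else some (P v).penultimate
      depth := fun v => (P v).length
      depth_of_parent := by
        intro v p h
        obtain ⟨hv, rfl⟩ : v ≠ r ∧ (P v).penultimate = p := by simpa using h
        have := concat (adj_penultimate hv) ((P v).getVert_mem_support _)
        exact (congrArg Walk.length this).trans (Walk.length_concat ..) }
  have parent_of_mem {v w} (h : G.Adj v w) (hv : v ∈ (P w).support) : F.parent w = some v := by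
    have hw : w ≠ r := by
      rintro rfl
      have hnil := Walk.nil_iff_support_eq.1 (Walk.isPath_iff_nil.1 (hP w))
      obtain rfl : v = w := by simpa [hnil] using hv
      exact h.ne rfl
    simp only [F, if_neg hw, concat h hv, Walk.penultimate_concat]
  refine ⟨F, ?_, fun v => by simp [F]⟩
  ext v w
  refine ⟨?_, fun h => ?_⟩
  · have adj_of_parent {v w} (h : F.parent v = some w) : G.Adj w v := by
      obtain ⟨hv, rfl⟩ : v ≠ r ∧ (P v).penultimate = w := by simpa [F] using h
      exact adj_penultimate hv
    rintro (h | h)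
    exacts [(adj_of_parent h).symm, adj_of_parent h]
  · by_cases hv : v ∈ (P w).support
    · exact Or.inr (parent_of_mem h hv)
    · exact Or.inl (parent_of_mem h.symm
        (hG.isAcyclic.mem_support_of_ne_mem_support_of_adj_of_isPath (hP v) (hP w) h hv))

section Children

variable [Fintype V] [DecidableEq V]

/-- The children of a vertex. -/
def children (F : RootedForest V) (v : V) : Finset V :=
  {c | F.parent c = some v}

variable {F : RootedForest V}

@[simp]
theorem mem_children {v c : V} : c ∈ F.children v ↔ F.parent c = some v := by
  simp [children]

theorem children_subset_neighborSet (v : V) : (F.children v : Set V) ⊆ F.graph.neighborSet v :=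
  fun _ hc => Or.inr (mem_children.1 hc)

theorem card_children_le_ncard_neighborSet (v : V) :
    (F.children v).card ≤ (F.graph.neighborSet v).ncard := by
  simpa only [Set.ncard_coe_finset] using Set.ncard_le_ncard (F.children_subset_neighborSet v)

theorem card_children_lt_ncard_neighborSet {v p : V} (hp : F.parent v = some p) :
    (F.children v).card < (F.graph.neighborSet v).ncard := by
  rw [← Set.ncard_coe_finset]
  refine Set.ncard_lt_ncard ⟨F.children_subset_neighborSet v, fun h => ?_⟩
  have hpv : F.parent p = some v := mem_children.1 (h (Or.inl hp))
  have := F.depth_of_parent hp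
  have := F.depth_of_parent hpv
  omega

theorem card_children_le {d : ℕ}
    (hroot : ∀ v, F.parent v = none → (F.graph.neighborSet v).ncard ≤ d)
    (hdeg : ∀ v, (F.graph.neighborSet v).ncard ≤ d + 1) (v : V) : (F.children v).card ≤ d := by
  cases hv : F.parent v with
  | none => exact (card_children_le_ncard_neighborSet v).trans (hroot v hv)
  | some p => exact Nat.le_of_lt_succ ((card_children_lt_ncard_neighborSet hv).trans_le (hdeg v))

theorem sum_eq_root_add_sum_children {M : Type*} [AddCommMonoid M] {r : V}
    (hr : ∀ v, F.parent v = none ↔ v = r) (f : V → M) :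
    ∑ v, f v = f r + ∑ v, ∑ c ∈ F.children v, f c := by
  rw [← Finset.sum_fiberwise _ F.parent f, Fintype.sum_option]
  simp only [hr, Finset.filter_eq', Finset.mem_univ, if_true, Finset.sum_singleton, children]

end Children

theorem wellFounded_parent [Finite V] (F : RootedForest V) :
    WellFounded fun c v => F.parent c = some v := by
  obtain ⟨N, hN⟩ := (Set.finite_range F.depth).bddAbove
  refine Subrelation.wf (fun {c v} h => ?_) (measure fun v => N - F.depth v).wf
  have := F.depth_of_parent h
  have := hN (Set.mem_range_self c)
  change N - F.depth c < N - F.depth v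
  omega

theorem wellFounded_child (F : RootedForest V) : WellFounded fun p v => F.parent v = some p :=
  Subrelation.wf (fun h => Nat.lt_of_succ_le (F.depth_of_parent h).ge) (measure F.depth).wf

theorem exists_eq_step_parent {S : Type*} (F : RootedForest V) (s₀ : S) (step : V → S → V → S) :
    ∃ f : V → S, (∀ v, F.parent v = none → f v = s₀) ∧
      ∀ v p, F.parent v = some p → f v = step p (f p) v := by
  let f : V → S := F.wellFounded_child.fix fun v f =>
    match h : F.parent v with
    | none => s₀
    | some p => step p (f p h) v
  have f_eq v : f v = match F.parent v with | none => s₀ | some p => step p (f p) v := by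
    simp only [f]
    rw [F.wellFounded_child.fix_eq]
    split <;> simp_all
  exact ⟨f, fun v hv => by rw [f_eq, hv], fun v p hv => by rw [f_eq, hv]⟩

section BranchSize

variable [Fintype V] [DecidableEq V]

/-- The number of vertices in the branch at `v`, i.e. of descendants of `v`, itself included. -/
noncomputable def branchSize (F : RootedForest V) : V → ℕ :=
  F.wellFounded_parent.fix fun v size =>
    1 + ∑ c : {c // F.parent c = some v}, size c c.2

theorem branchSize_eq {F : RootedForest V} (v : V) :
    F.branchSize v = 1 + ∑ c ∈ F.children v, F.branchSize c := by
  rw [Finset.sum_subtype (p := fun c => F.parent c = some v) _ (fun _ => mem_children)]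
  exact F.wellFounded_parent.fix_eq _ v

theorem branchSize_root {F : RootedForest V} {r : V} (hr : ∀ v, F.parent v = none ↔ v = r) :
    F.branchSize r = Fintype.card V := by
  have h := sum_eq_root_add_sum_children hr F.branchSize
  rw [Finset.sum_congr rfl fun v _ => branchSize_eq v, Finset.sum_add_distrib] at h
  simpa [eq_comm] using h

end BranchSize

end RootedForest

/-- The state of a vertex `v` with parent `p` relative to a code `C`: whether `v ∈ C`, whether
`p ∈ C`, and what `v` needs from its children or from its parent so as to be dominated and
separated.

* `hanging`: `v ∉ C`, `p ∈ C`, and `N[v] ∩ C` may be `{p}`;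
* `between`: `v ∉ C`, `p ∈ C`, and `v` has a child in `C`;
* `carried`: `v ∉ C`, `p ∉ C`, and `v` has a child in `C`;
* `top`: `v ∈ C`, `p ∉ C`;
* `strongTop`: `v ∈ C`, `p ∉ C`, `v` has a child in `C`, and `N[p] ∩ C` may be `{v}`;
* `inner`: `v ∈ C`, `p ∈ C`, and `v` has a child in `C`;
* `bottom`: `v ∈ C`, `p ∈ C`, and `N[v] ∩ C` may be `{v, p}`. -/
inductive CodeState
  | hanging | between | carried | top | strongTop | inner | bottom
  deriving DecidableEq, Inhabited

namespace CodeState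

/-- Whether a vertex in state `s` belongs to the code. -/
def inCode : CodeState → Bool
  | top | strongTop | inner | bottom => true
  | hanging | between | carried => false

/-- Whether the parent of a vertex in state `s` belongs to the code. -/
def parentInCode : CodeState → Bool
  | hanging | between | inner | bottom => true
  | carried | top | strongTop => false

/-- Whether state `s` guarantees a child in the code. -/
def hasCodeChild : CodeState → Bool
  | between | carried | strongTop | inner => true
  | hanging | top | bottom => false

/-- The local conditions for a vertex in state `s` to have children whose states form `L`. They
separate hanging children from each other (`count_hanging_le_one`), from their parent (`of_top`) and
from their grandparent (`hanging_notMem`), and vertices of the code from their parents (`of_carried`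
and `of_bottom_mem`). -/
structure Compatible (s : CodeState) (L : Multiset CodeState) : Prop where
  parentInCode_eq : ∀ q ∈ L, q.parentInCode = s.inCode
  countP_pos : s.hasCodeChild → 0 < L.countP (·.inCode)
  of_carried : s = carried → strongTop ∈ L ∨ 2 ≤ L.countP (·.inCode)
  hanging_notMem : s = strongTop → hanging ∉ L
  count_hanging_le_one : L.count hanging ≤ 1
  of_top : s = top → hanging ∈ L → 0 < L.countP (·.inCode)
  of_bottom_mem : bottom ∈ L → s.parentInCode ∨ 2 ≤ L.countP (·.inCode)

instance (s : CodeState) (L : Multiset CodeState) : Decidable (Compatible s L) :=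
  decidable_of_iff
    ((∀ q ∈ L, q.parentInCode = s.inCode) ∧ (s.hasCodeChild → 0 < L.countP (·.inCode)) ∧
      (s = carried → strongTop ∈ L ∨ 2 ≤ L.countP (·.inCode)) ∧ (s = strongTop → hanging ∉ L) ∧
      L.count hanging ≤ 1 ∧ (s = top → hanging ∈ L → 0 < L.countP (·.inCode)) ∧
      (bottom ∈ L → s.parentInCode ∨ 2 ≤ L.countP (·.inCode)))
    ⟨fun ⟨h₁, h₂, h₃, h₄, h₅, h₆, h₇⟩ => ⟨h₁, h₂, h₃, h₄, h₅, h₆, h₇⟩,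
      fun ⟨h₁, h₂, h₃, h₄, h₅, h₆, h₇⟩ => ⟨h₁, h₂, h₃, h₄, h₅, h₆, h₇⟩⟩

theorem Compatible.of_cons {s q : CodeState} {L : Multiset CodeState} (h : Compatible s (q ::ₘ L))
    (hq : q.inCode = false) : Compatible s L := by
  have mem_iff {p : CodeState} (hp : p.inCode) : p ∈ q ::ₘ L ↔ p ∈ L := by
    rw [Multiset.mem_cons, or_iff_right]
    rintro rfl
    simp [hp] at hq
  have countP_eq : (q ::ₘ L).countP (·.inCode) = L.countP (·.inCode) := by simp [hq]
  obtain ⟨h₁, h₂, h₃, h₄, h₅, h₆, h₇⟩ := h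
  rw [countP_eq] at h₂ h₃ h₆ h₇
  rw [mem_iff rfl] at h₃ h₇
  exact ⟨fun p hp => h₁ p (Multiset.mem_cons_of_mem hp), h₂, h₃,
    fun hs hL => h₄ hs (Multiset.mem_cons_of_mem hL),
    (Multiset.count_le_of_le _ (Multiset.le_cons_self L q)).trans h₅,
    fun hs hL => h₆ hs (Multiset.mem_cons_of_mem hL), h₇⟩

end CodeState

namespace RootedForest

variable {V : Type*} {F : RootedForest V} {σ : V → CodeState} {v w p : V}

/-- The code formed by the states `σ` does not separate `v` from `w`. -/
def Confused (F : RootedForest V) (σ : V → CodeState) (v w : V) : Prop :=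
  ∀ z, (σ z).inCode → (z ∈ closedNbhd F.graph v ↔ z ∈ closedNbhd F.graph w)

namespace Confused

theorem symm (h : F.Confused σ v w) : F.Confused σ w v :=
  fun z hz => (h z hz).symm

theorem inCode_child_eq_false (h : F.Confused σ v w) (hvw : v ≠ w) (hd : F.depth w ≤ F.depth v)
    {c : V} (hc : F.parent c = some v) : (σ c).inCode = false := by
  have := h c
  have := F.depth_of_parent hc
  grind [mem_closedNbhd_graph, → depth_of_parent]

theorem parent_eq_of_inCode (h : F.Confused σ v w) (hvw : v ≠ w) (hd : F.depth w ≤ F.depth v)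
    (hv : (σ v).inCode) : F.parent v = some w := by
  have := h v hv
  grind [mem_closedNbhd_graph, → depth_of_parent]

theorem eq_of_parent_eq (h : F.Confused σ v w) (hv : F.parent v = some w) {c : V}
    (hc : F.parent c = some w) (hcC : (σ c).inCode) : c = v := by
  have := h c hcC
  grind [mem_closedNbhd_graph, → depth_of_parent]

theorem inCode_grandparent_eq_false (h : F.Confused σ v w) (hv : F.parent v = some w)
    (hw : F.parent w = some p) : (σ p).inCode = false := by
  have := h p
  grind [mem_closedNbhd_graph, → depth_of_parent]

end Confused

variable [Fintype V] [DecidableEq V]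

theorem mem_map_children (hp : F.parent v = some p) : σ v ∈ (F.children p).val.map σ :=
  Multiset.mem_map_of_mem σ (mem_children.2 hp)

theorem exists_inCode_child_of_countP_pos (h : 0 < ((F.children v).val.map σ).countP (·.inCode)) :
    ∃ c, F.parent c = some v ∧ (σ c).inCode := by
  simpa [Multiset.countP_pos] using h

theorem exists_inCode_child_ne (h : 2 ≤ ((F.children v).val.map σ).countP (·.inCode)) (x : V) :
    ∃ c, F.parent c = some v ∧ (σ c).inCode ∧ c ≠ x := by
  rw [Multiset.countP_map] at h
  obtain ⟨c, hc, hcx⟩ := Finset.exists_mem_ne (s := {c ∈ F.children v | (σ c).inCode}) h x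
  rw [Finset.mem_filter, mem_children] at hc
  exact ⟨c, hc.1, hc.2, hcx⟩

/-- `σ` assigns locally compatible states to all vertices, where a missing parent counts as a
vertex outside the code. -/
structure IsLabelling (F : RootedForest V) (σ : V → CodeState) : Prop where
  compatible : ∀ v, CodeState.Compatible (σ v) ((F.children v).val.map σ)
  root : ∀ v, F.parent v = none → (σ v).parentInCode = false

namespace IsLabelling

theorem eq_of_hanging (hσ : F.IsLabelling σ) (hv : F.parent v = some p) (hw : F.parent w = some p)
    (hvs : σ v = .hanging) (hws : σ w = .hanging) : v = w := by
  have h : Finset.card {c ∈ F.children p | .hanging = σ c} ≤ 1 :=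
    (Multiset.count_map ..).ge.trans (hσ.compatible p).count_hanging_le_one
  exact Finset.card_le_one.1 h v (by simp [hv, hvs]) w (by simp [hw, hws])

theorem parentInCode_eq (hσ : F.IsLabelling σ) (hp : F.parent v = some p) :
    (σ v).parentInCode = (σ p).inCode :=
  (hσ.compatible p).parentInCode_eq _ (mem_map_children hp)

theorem exists_inCode_parent (hσ : F.IsLabelling σ) (hv : (σ v).parentInCode) :
    ∃ p, F.parent v = some p ∧ (σ p).inCode := by
  cases hp : F.parent v with
  | none => simp [hσ.root v hp] at hv
  | some p => exact ⟨p, rfl, hσ.parentInCode_eq hp ▸ hv⟩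

theorem exists_inCode_child (hσ : F.IsLabelling σ) (hv : (σ v).hasCodeChild) :
    ∃ c, F.parent c = some v ∧ (σ c).inCode :=
  exists_inCode_child_of_countP_pos ((hσ.compatible v).countP_pos hv)

theorem hasCodeChild_eq_false (hσ : F.IsLabelling σ)
    (hchild : ∀ c, F.parent c = some v → (σ c).inCode = false) :
    (σ v).hasCodeChild = false := by
  by_contra hv
  obtain ⟨c, hc, hcC⟩ := hσ.exists_inCode_child (Bool.eq_true_of_not_eq_false hv)
  simp [hchild c hc] at hcC

theorem dominates (hσ : F.IsLabelling σ) (v : V) :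
    (closedNbhd F.graph v ∩ {z | (σ z).inCode}).Nonempty := by
  have h : (σ v).inCode ∨ (σ v).parentInCode ∨ (σ v).hasCodeChild := by
    cases σ v <;> simp [CodeState.inCode, CodeState.parentInCode, CodeState.hasCodeChild]
  rcases h with h | h | h
  · exact ⟨v, mem_closedNbhd_graph.2 (.inl rfl), h⟩
  · obtain ⟨p, hp, hpC⟩ := hσ.exists_inCode_parent h
    exact ⟨p, mem_closedNbhd_graph.2 (.inr (.inr hp)), hpC⟩
  · obtain ⟨c, hc, hcC⟩ := hσ.exists_inCode_child h
    exact ⟨c, mem_closedNbhd_graph.2 (.inr (.inl hc)), hcC⟩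

theorem eq_hanging (hσ : F.IsLabelling σ) (hv : (σ v).inCode = false)
    (hchild : ∀ c, F.parent c = some v → (σ c).inCode = false) : σ v = .hanging := by
  have := hσ.hasCodeChild_eq_false hchild
  revert hv this
  cases σ v <;> simp [CodeState.inCode, CodeState.hasCodeChild]

theorem eq_carried (hσ : F.IsLabelling σ) (hw : (σ w).inCode = false)
    (hp : ∀ p, F.parent w = some p → (σ p).inCode = false) : σ w = .carried := by
  have : (σ w).parentInCode = false := by
    by_contra h
    obtain ⟨p, hwp, hpC⟩ := hσ.exists_inCode_parent (Bool.eq_true_of_not_eq_false h)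
    simp [hp p hwp] at hpC
  revert hw this
  cases σ w <;> simp [CodeState.inCode, CodeState.parentInCode]

theorem eq_strongTop_of_carried (hσ : F.IsLabelling σ) (hw : σ w = .carried)
    (h : ∀ c, F.parent c = some w → (σ c).inCode → c = v) : σ v = .strongTop := by
  rcases (hσ.compatible w).of_carried hw with hL | hL
  · obtain ⟨c, hc, hcs⟩ : ∃ c, F.parent c = some w ∧ σ c = .strongTop := by simpa using hL
    exact h c hc (hcs ▸ rfl) ▸ hcs
  · obtain ⟨c, hc, hcC, hcv⟩ := exists_inCode_child_ne hL v
    exact (hcv (h c hc hcC)).elim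

theorem parentInCode_eq_false_of_confused_parent (hσ : F.IsLabelling σ)
    (hv : F.parent v = some w) (h : F.Confused σ v w) : (σ w).parentInCode = false := by
  by_contra hw
  obtain ⟨p, hp, hpC⟩ := hσ.exists_inCode_parent (Bool.eq_true_of_not_eq_false hw)
  simp [h.inCode_grandparent_eq_false hv hp] at hpC

theorem not_confused_parent_of_hanging (hσ : F.IsLabelling σ) (hv : F.parent v = some w)
    (hvs : σ v = .hanging) : ¬ F.Confused σ v w := by
  intro h
  have hmem : .hanging ∈ (F.children w).val.map σ := hvs ▸ mem_map_children hv
  have hws : σ w = .top ∨ σ w = .strongTop := by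
    have hpar := hσ.parentInCode_eq_false_of_confused_parent hv h
    have hw := hσ.parentInCode_eq hv
    rw [hvs] at hw
    revert hpar hw
    cases σ w <;> simp [CodeState.inCode, CodeState.parentInCode]
  rcases hws with hws | hws
  · obtain ⟨c, hc, hcC⟩ :=
      exists_inCode_child_of_countP_pos ((hσ.compatible w).of_top hws hmem)
    obtain rfl := h.eq_of_parent_eq hv hc hcC
    exact absurd (hvs ▸ hcC) (by decide)
  · exact (hσ.compatible w).hanging_notMem hws hmem

theorem not_confused_parent_of_top (hσ : F.IsLabelling σ) (hv : F.parent v = some w)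
    (hvs : σ v = .top) : ¬ F.Confused σ v w := by
  intro h
  have hws : σ w = .carried :=
    hσ.eq_carried (hσ.parentInCode_eq hv ▸ hvs ▸ rfl)
      fun _ hp => h.inCode_grandparent_eq_false hv hp
  have := hσ.eq_strongTop_of_carried hws fun _ hc hcC => h.eq_of_parent_eq hv hc hcC
  simp [hvs] at this

theorem not_confused_parent_of_bottom (hσ : F.IsLabelling σ) (hv : F.parent v = some w)
    (hvs : σ v = .bottom) : ¬ F.Confused σ v w := by
  intro h
  rcases (hσ.compatible w).of_bottom_mem (hvs ▸ mem_map_children hv) with hw | hL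
  · simp [hσ.parentInCode_eq_false_of_confused_parent hv h] at hw
  · obtain ⟨c, hc, hcC, hcv⟩ := exists_inCode_child_ne hL v
    exact hcv (h.eq_of_parent_eq hv hc hcC)

theorem not_confused_parent (hσ : F.IsLabelling σ) (hv : F.parent v = some w)
    (hchild : (σ v).hasCodeChild = false) : ¬ F.Confused σ v w := by
  cases hvs : σ v with
  | hanging => exact hσ.not_confused_parent_of_hanging hv hvs
  | top => exact hσ.not_confused_parent_of_top hv hvs
  | bottom => exact hσ.not_confused_parent_of_bottom hv hvs
  | between | carried | strongTop | inner => simp [hvs, CodeState.hasCodeChild] at hchild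

theorem not_confused_grandparent (hσ : F.IsLabelling σ) (hv : F.parent v = some p)
    (hp : F.parent p = some w) (hvs : σ v = .hanging)
    (hchild : ∀ c, F.parent c = some v → (σ c).inCode = false) : ¬ F.Confused σ v w := by
  intro h
  have hvC : (σ v).inCode = false := hvs ▸ rfl
  have hw : (σ w).inCode = false := by
    have := h w
    grind [mem_closedNbhd_graph, → depth_of_parent]
  have hwparent : ∀ q, F.parent w = some q → (σ q).inCode = false := fun q hq => by
    have := h q
    grind [mem_closedNbhd_graph, → depth_of_parent]
  have honly : ∀ c, F.parent c = some w → (σ c).inCode → c = p := fun c hc hcC => by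
    have := h c hcC
    grind [mem_closedNbhd_graph, → depth_of_parent]
  have hps := hσ.eq_strongTop_of_carried (hσ.eq_carried hw hwparent) honly
  exact (hσ.compatible p).hanging_notMem hps (hvs ▸ mem_map_children hv)

theorem not_confused_sibling (hσ : F.IsLabelling σ) (hv : F.parent v = some p)
    (hw : F.parent w = some p) (hvs : σ v = .hanging) (hvw : v ≠ w) : ¬ F.Confused σ v w := by
  intro h
  have hdepth : F.depth v = F.depth w := (F.depth_of_parent hv).trans (F.depth_of_parent hw).symm
  have hwC : (σ w).inCode = false := by
    by_contra hwC
    have := h.symm.parent_eq_of_inCode hvw.symm hdepth.le (Bool.eq_true_of_not_eq_false hwC)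
    have := F.depth_of_parent this
    omega
  have hws := hσ.eq_hanging hwC fun _ hc => h.symm.inCode_child_eq_false hvw.symm hdepth.le hc
  exact hvw (hσ.eq_of_hanging hv hw hvs hws)

theorem not_confused (hσ : F.IsLabelling σ) (hvw : v ≠ w) (hd : F.depth w ≤ F.depth v) :
    ¬ F.Confused σ v w := by
  intro h
  have hchild : ∀ c, F.parent c = some v → (σ c).inCode = false :=
    fun _ hc => h.inCode_child_eq_false hvw hd hc
  have hparent : F.parent v ≠ some w :=
    fun hv => hσ.not_confused_parent hv (hσ.hasCodeChild_eq_false hchild) h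
  have hvC : (σ v).inCode = false :=
    Bool.eq_false_of_not_eq_true fun hv => hparent (h.parent_eq_of_inCode hvw hd hv)
  have hvs := hσ.eq_hanging hvC hchild
  obtain ⟨p, hp, hpC⟩ := hσ.exists_inCode_parent (v := v) (hvs ▸ rfl)
  rcases mem_closedNbhd_graph.1 ((h p hpC).1 (mem_closedNbhd_graph.2 (.inr (.inr hp)))) with
    rfl | hpw | hwp
  · exact hparent hp
  · exact hσ.not_confused_grandparent hp hpw hvs hchild h
  · exact hσ.not_confused_sibling hp hwp hvs hvw h

theorem isIDCode (hσ : F.IsLabelling σ) : IsIDCode F.graph {z | (σ z).inCode} := by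
  refine ⟨hσ.dominates, fun v w hvw heq => ?_⟩
  have h : F.Confused σ v w := fun z hz => by
    simpa [hz] using Set.ext_iff.1 heq z
  rcases le_total (F.depth w) (F.depth v) with hd | hd
  · exact hσ.not_confused hvw hd h
  · exact hσ.not_confused hvw.symm hd h.symm

end IsLabelling

end RootedForest

namespace CodeState

/-- The contribution of a vertex in state `s` to `3 * |C| - 2 * n`. -/
def weight (s : CodeState) : ℤ :=
  (if s.inCode then 3 else 0) - 2

theorem sum_weight {V : Type*} [Fintype V] (σ : V → CodeState) :
    ∑ v, (σ v).weight = 3 * {v | (σ v).inCode}.ncard - 2 * Fintype.card V := by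
  simp only [weight, Finset.sum_sub_distrib, ← Finset.sum_filter, Finset.sum_const,
    Set.ncard_eq_toFinset_card', Set.toFinset_ofPred]
  simp [mul_comm]

/-- A profile lists pairs `(s, k)`, read as: the branch under consideration has a labelling with
its root in state `s` and of total weight at most `k`. -/
abbrev Profile := List (CodeState × ℤ)

/-- Lists of branch sizes, each with a profile. Every branch has one of the profiles listed for its
size, taken up to `reducedSize`. Size `0` stands for an absent child, which acts like a child
outside the code. The table was found by a computer search for a short one that is closed under
`Yields`. -/
def profileTable : List (List ℕ × Profile) :=
  [([0], [(between, 0), (carried, 0)]),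
    ([1], [(hanging, -2), (top, 1), (bottom, 1)]),
    ([2, 5, 8, 11, 14], [(between, -1), (bottom, -1)]),
    ([3], [(carried, 0), (inner, 0)]),
    ([3, 6, 9, 12, 15], [(top, 0), (inner, 0)]),
    ([4, 7], [(hanging, -2), (strongTop, 1), (inner, 1)]),
    ([4, 7, 10, 13, 16, 19, 22], [(inner, -2)]),
    ([5, 8, 11, 14, 17, 20, 23], [(top, -1), (inner, -1)]),
    ([10, 13, 16, 19], [(between, -2), (strongTop, 1), (inner, 1)]),
    ([17, 20], [(between, -1), (top, -1), (bottom, -1)]),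
    ([18, 21], [(between, -3), (top, 0), (inner, 0)]),
    ([18, 21], [(bottom, -3)]),
    ([18, 21, 24], [(top, 0), (strongTop, 0), (inner, 0)]),
    ([22], [(between, -2), (bottom, -2)]),
    ([22, 25], [(between, -2), (carried, -2), (strongTop, 1), (inner, 1)]),
    ([23], [(hanging, -4), (between, -1), (top, -1), (bottom, -1)]),
    ([24], [(between, -3), (top, 0), (bottom, -3)]),
    ([25], [(top, -2), (inner, -2)])]

/-- The representative below `26` of a branch size; sizes from `23` on only matter modulo `3`. -/
def reducedSize (n : ℕ) : ℕ :=
  if n < 26 then n else 23 + (n - 23) % 3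

/-- The profiles of which each branch of size `n` satisfies at least one. -/
def profiles (n : ℕ) : List Profile :=
  (profileTable.filter (reducedSize n ∈ ·.1)).map (·.2)

/-- Branches with profiles `a` and `b` may be joined below a new vertex into one with profile
`g`. -/
def Yields (a b g : Profile) : Prop :=
  ∀ x ∈ g, ∃ y ∈ a, ∃ z ∈ b, y.2 + z.2 + x.1.weight ≤ x.2 ∧ Compatible x.1 {y.1, z.1}

instance (a b g : Profile) : Decidable (Yields a b g) :=
  inferInstanceAs (Decidable (∀ x ∈ g, _))

theorem reducedSize_lt (n : ℕ) : reducedSize n < 26 := by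
  unfold reducedSize
  split_ifs <;> omega

theorem reducedSize_reducedSize (n : ℕ) : reducedSize (reducedSize n) = reducedSize n :=
  if_pos (reducedSize_lt n)

theorem reducedSize_reducedSize_add (m n : ℕ) :
    reducedSize (reducedSize m + reducedSize n + 1) = reducedSize (m + n + 1) := by
  unfold reducedSize
  split_ifs <;> omega

theorem profiles_congr {m n : ℕ} (h : reducedSize m = reducedSize n) :
    profiles m = profiles n := by
  rw [profiles, profiles, h]

theorem exists_yields_of_lt : ∀ i < 26, ∀ j < 26, ∀ a ∈ profiles i, ∀ b ∈ profiles j,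
    ∃ g ∈ profiles (i + j + 1), Yields a b g := by
  decide +kernel

theorem exists_yields {m n : ℕ} {a b : Profile} (ha : a ∈ profiles m) (hb : b ∈ profiles n) :
    ∃ g ∈ profiles (m + n + 1), Yields a b g := by
  rw [← profiles_congr (reducedSize_reducedSize m)] at ha
  rw [← profiles_congr (reducedSize_reducedSize n)] at hb
  rw [← profiles_congr (reducedSize_reducedSize_add m n)]
  exact exists_yields_of_lt _ (reducedSize_lt m) _ (reducedSize_lt n) a ha b hb

theorem exists_mem_profile_root {n : ℕ} (hn : 23 ≤ n) {a : Profile} (ha : a ∈ profiles n) :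
    ∃ x ∈ a, x.1.parentInCode = false ∧ x.2 ≤ 0 := by
  have h : ∀ i < 26, 23 ≤ i → ∀ a ∈ profiles i, ∃ x ∈ a, x.1.parentInCode = false ∧ x.2 ≤ 0 := by
    decide +kernel
  refine h _ (reducedSize_lt n) ?_ a (profiles_congr (reducedSize_reducedSize n) ▸ ha)
  unfold reducedSize
  split_ifs <;> omega

/-- The profile of an absent child. -/
def absentProfile : Profile :=
  [(between, 0), (carried, 0)]

theorem absentProfile_mem_profiles_zero : absentProfile ∈ profiles 0 := by
  decide

theorem of_mem_absentProfile {y : CodeState × ℤ} (hy : y ∈ absentProfile) :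
    y.1.inCode = false ∧ y.2 = 0 := by
  revert y
  decide

theorem exists_profile_of_card_le_two {ι : Type*} {K : Finset ι} (hK : K.card ≤ 2)
    {size : ι → ℕ} {P : ι → Profile} (hP : ∀ c ∈ K, P c ∈ profiles (size c)) :
    ∃ g ∈ profiles (1 + ∑ c ∈ K, size c), ∀ x ∈ g, ∃ q : ι → CodeState × ℤ,
      (∀ c ∈ K, q c ∈ P c) ∧
      Compatible x.1 (K.val.map fun c => (q c).1) ∧
      x.1.weight + ∑ c ∈ K, (q c).2 ≤ x.2 := by
  classical
  obtain h | h | h : K.card = 0 ∨ K.card = 1 ∨ K.card = 2 := by omega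
  · obtain rfl := Finset.card_eq_zero.1 h
    obtain ⟨g, hg, hyields⟩ :=
      exists_yields absentProfile_mem_profiles_zero absentProfile_mem_profiles_zero
    refine ⟨g, hg, fun x hx => ?_⟩
    obtain ⟨y, hy, z, hz, hle, hcompat⟩ := hyields x hx
    obtain ⟨hy, hy0⟩ := of_mem_absentProfile hy
    obtain ⟨hz, hz0⟩ := of_mem_absentProfile hz
    exact ⟨fun _ => y, by simp, (hcompat.of_cons hy).of_cons hz, by
      rw [Finset.sum_empty]; omega⟩
  · obtain ⟨c, rfl⟩ := Finset.card_eq_one.1 h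
    obtain ⟨g, hg, hyields⟩ :=
      exists_yields absentProfile_mem_profiles_zero (hP c (Finset.mem_singleton_self c))
    refine ⟨g, by simpa [add_comm] using hg, fun x hx => ?_⟩
    obtain ⟨y, hy, z, hz, hle, hcompat⟩ := hyields x hx
    obtain ⟨hy, hy0⟩ := of_mem_absentProfile hy
    exact ⟨fun _ => z, by simpa using hz, by simpa using hcompat.of_cons hy, by
      simp only [Finset.sum_singleton]; omega⟩
  · obtain ⟨c, d, hcd, rfl⟩ := Finset.card_eq_two.1 h
    obtain ⟨g, hg, hyields⟩ := exists_yields (hP c (by simp)) (hP d (by simp))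
    refine ⟨g, by simpa [Finset.sum_pair hcd, add_comm] using hg, fun x hx => ?_⟩
    obtain ⟨y, hy, z, hz, hle, hcompat⟩ := hyields x hx
    refine ⟨fun e => if e = c then y else z, ?_, ?_, ?_⟩
    · simp [hy, hz, hcd.symm]
    · rw [Finset.insert_val_of_notMem (by simpa using hcd)]
      simpa [hcd.symm] using hcompat
    · simp only [Finset.sum_pair hcd, if_true, if_neg hcd.symm]
      omega

end CodeState

namespace RootedForest

variable {V : Type*} [Fintype V] [DecidableEq V] {F : RootedForest V}

open CodeState

/-- The branch at a vertex has a labelling with its root in the given state and with weight at most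
the given integer. -/
inductive Feasible (F : RootedForest V) : V → CodeState → ℤ → Prop
  | intro {v : V} {s : CodeState} {k : ℤ} (q : V → CodeState × ℤ)
      (feasible : ∀ c ∈ F.children v, F.Feasible c (q c).1 (q c).2)
      (compatible : s.Compatible ((F.children v).val.map fun c => (q c).1))
      (weight_le : s.weight + ∑ c ∈ F.children v, (q c).2 ≤ k) : F.Feasible v s k

theorem exists_profile_feasible (hF : ∀ v, (F.children v).card ≤ 2) (v : V) :
    ∃ P ∈ profiles (F.branchSize v), ∀ x ∈ P, F.Feasible v x.1 x.2 := by
  induction v using F.wellFounded_parent.induction with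
  | _ v ih =>
    choose! P hP hfeasible using ih
    obtain ⟨g, hg, hstep⟩ :=
      exists_profile_of_card_le_two (hF v) fun c hc => hP c (mem_children.1 hc)
    refine ⟨g, branchSize_eq (F := F) v ▸ hg, fun x hx => ?_⟩
    obtain ⟨q, hq, hcompat, hle⟩ := hstep x hx
    exact .intro q (fun c hc => hfeasible c (mem_children.1 hc) _ (hq c hc)) hcompat hle

theorem Feasible.exists_states {r : V} (hr : ∀ v, F.parent v = none ↔ v = r) {s : CodeState} {k : ℤ}
    (h : F.Feasible r s k) :
    ∃ f : V → CodeState × ℤ, f r = (s, k) ∧ ∀ v,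
      (f v).1.Compatible ((F.children v).val.map fun c => (f c).1) ∧
      (f v).1.weight + ∑ c ∈ F.children v, (f c).2 ≤ (f v).2 := by
  have step (v : V) (x : CodeState × ℤ) (hx : F.Feasible v x.1 x.2) : ∃ q : V → CodeState × ℤ,
      (∀ c ∈ F.children v, F.Feasible c (q c).1 (q c).2) ∧
      x.1.Compatible ((F.children v).val.map fun c => (q c).1) ∧
      x.1.weight + ∑ c ∈ F.children v, (q c).2 ≤ x.2 := by
    obtain ⟨q, hfeasible, hcompat, hle⟩ := hx
    exact ⟨q, hfeasible, hcompat, hle⟩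
  choose! q hq using step
  obtain ⟨f, hroot, hf⟩ := F.exists_eq_step_parent (s, k) q
  have hfr : f r = (s, k) := hroot r ((hr r).2 rfl)
  have hfeasible (v : V) : F.Feasible v (f v).1 (f v).2 := by
    induction v using F.wellFounded_child.induction with
    | _ v ih =>
      cases hv : F.parent v with
      | none => rwa [(hr v).1 hv, hfr]
      | some p => exact hf v p hv ▸ (hq p (f p) (ih p hv)).1 v (mem_children.2 hv)
  refine ⟨f, hfr, fun v => ?_⟩
  have hchildren : ∀ c ∈ F.children v, q v (f v) c = f c :=
    fun c hc => (hf c v (mem_children.1 hc)).symm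
  obtain ⟨-, hcompat, hle⟩ := hq v (f v) (hfeasible v)
  rw [Multiset.map_congr rfl fun c hc => congrArg Prod.fst (hchildren c hc)] at hcompat
  rw [Finset.sum_congr rfl fun c hc => congrArg Prod.snd (hchildren c hc)] at hle
  exact ⟨hcompat, hle⟩

theorem Feasible.exists_labelling {r : V} (hr : ∀ v, F.parent v = none ↔ v = r) {s : CodeState}
    {k : ℤ} (h : F.Feasible r s k) (hs : s.parentInCode = false) :
    ∃ σ, F.IsLabelling σ ∧ ∑ v, (σ v).weight ≤ k := by
  obtain ⟨f, hfr, hf⟩ := h.exists_states hr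
  refine ⟨fun v => (f v).1, ⟨fun v => (hf v).1, fun v hv => ?_⟩, ?_⟩
  · rw [(hr v).1 hv, hfr, hs]
  · have hsum := sum_eq_root_add_sum_children hr fun v => (f v).2
    simp only [hfr] at hsum
    calc ∑ v, (f v).1.weight ≤ ∑ v, ((f v).2 - ∑ c ∈ F.children v, (f c).2) :=
          Finset.sum_le_sum fun v _ => le_sub_iff_add_le.2 (hf v).2
      _ = k := by rw [Finset.sum_sub_distrib, hsum, add_sub_cancel_right]

theorem exists_labelling_weight_nonpos {r : V} (hr : ∀ v, F.parent v = none ↔ v = r)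
    (hF : ∀ v, (F.children v).card ≤ 2) (hn : 23 ≤ Fintype.card V) :
    ∃ σ, F.IsLabelling σ ∧ ∑ v, (σ v).weight ≤ 0 := by
  obtain ⟨P, hP, hfeasible⟩ := F.exists_profile_feasible hF r
  rw [branchSize_root hr] at hP
  obtain ⟨x, hx, hs, hk⟩ := exists_mem_profile_root hn hP
  obtain ⟨σ, hσ, hle⟩ := (hfeasible x hx).exists_labelling hr hs
  exact ⟨σ, hσ, hle.trans hk⟩

end RootedForest

theorem stmt_2_general {V : Type*} [Fintype V] (G : SimpleGraph V) (hT : G.IsTree)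
    (hn : 23 ≤ Fintype.card V) (hmax : maxDeg G ≤ 3) :
    (idNum G : ℝ) ≤ 2 / 3 * (Fintype.card V) := by
  classical
  have : Nontrivial V := Fintype.one_lt_card_iff_nontrivial.1 (by omega)
  obtain ⟨r, hr⟩ := hT.exists_vert_degree_one_of_nontrivial
  obtain ⟨F, rfl, hroot⟩ := RootedForest.exists_graph_eq hT r
  have hdeg (v : V) : (F.graph.neighborSet v).ncard ≤ 3 :=
    (Finset.le_sup (f := fun v => (F.graph.neighborSet v).ncard) (Finset.mem_univ v)).trans hmax
  have hleaf : (F.graph.neighborSet r).ncard = 1 := by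
    rw [Set.ncard_eq_toFinset_card', Set.toFinset_card, card_neighborSet_eq_degree, hr]
  have hF := F.card_children_le (d := 2) (fun v hv => by rw [(hroot v).1 hv, hleaf]; omega) hdeg
  obtain ⟨σ, hσ, hle⟩ := RootedForest.exists_labelling_weight_nonpos hroot hF hn
  rw [CodeState.sum_weight] at hle
  have hid : idNum F.graph ≤ _ := Nat.sInf_le ⟨_, rfl, hσ.isIDCode⟩
  have : (3 * idNum F.graph : ℝ) ≤ 2 * Fintype.card V := by
    exact_mod_cast (by omega : 3 * idNum F.graph ≤ 2 * Fintype.card V)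
  linarith

/-- every tree on `n ≥ 23` vertices with maximum degree exactly `3`
satisfies `γ^ID(G) ≤ (2/3)·n`. -/
theorem stmt_2 {V : Type*} [Fintype V] (G : SimpleGraph V) (hT : G.IsTree)
    (hn : 23 ≤ Fintype.card V) (hmax : maxDeg G = 3) :
    (idNum G : ℝ) ≤ 2 / 3 * (Fintype.card V) :=
  stmt_2_general G hT hn hmax.le
end

section
/- Let G' be an identifiable graph on a finite vertex set V, let v ∈ V, and let Δ ≥ 3 be an integer. Let G be the graph on vertex set V ⊔ {u, l_1, …, l_{Δ−1}} (where u, l_1, …, l_{Δ−1} are Δ new vertices) whose edges are: all edges of G', the edge between v and u, and the edges between u and each l_i (1 ≤ i ≤ Δ−1). Then G is identifiable and γ^ID(G) ≤ γ^ID(G') + Δ − 1. -/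
open SimpleGraph

/-!
To an identifying code of the base graph, add all the leaves `l_i` of the star and leave out its
centre `u`. The leaves alone see `∅` from a vertex of the base graph, the set of all leaves from
`u`, and `{l_i}` from `l_i`; these are different as soon as there are two leaves, and two vertices
of the base graph are separated by the original code.
-/

section IdentifyingCode

variable {V : Type*} {G : SimpleGraph V} {C : Set V}

theorem mem_closedNbhd {x y : V} : y ∈ closedNbhd G x ↔ y = x ∨ G.Adj x y :=
  Iff.rfl

theorem isIDCode_iff_isDomSet_and_injective :
    IsIDCode G C ↔ IsDomSet G C ∧ Function.Injective fun x => closedNbhd G x ∩ C :=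
  and_congr_right fun _ => forall₂_congr fun _ _ => not_imp_not

theorem IsIDCode.identifiable (hC : IsIDCode G C) : Identifiable G :=
  fun x y hxy h => hC.2 x y hxy (congrArg (· ∩ C) h)

theorem Identifiable.isIDCode_univ (hG : Identifiable G) : IsIDCode G Set.univ :=
  ⟨fun x => ⟨x, Set.mem_insert .., Set.mem_univ x⟩,
    fun x y hxy => by simpa only [Set.inter_univ] using hG x y hxy⟩

variable [Fintype V]

theorem IsIDCode.idNum_le_ncard (hC : IsIDCode G C) : idNum G ≤ C.ncard :=
  Nat.sInf_le ⟨C, rfl, hC⟩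

theorem Identifiable.exists_isIDCode_ncard_eq_idNum (hG : Identifiable G) :
    ∃ C : Set V, IsIDCode G C ∧ C.ncard = idNum G := by
  obtain ⟨C, hcard, hC⟩ := Nat.sInf_mem
    (s := {k | ∃ C : Set V, C.ncard = k ∧ IsIDCode G C}) ⟨_, Set.univ, rfl, hG.isIDCode_univ⟩
  exact ⟨C, hC, hcard⟩

end IdentifyingCode

namespace appendStar

variable {V : Type*} {k : ℕ}

/-- The `i`-th new leaf, as a vertex of a graph of the form `appendStar G v k`. -/
abbrev leaf (i : Fin k) : V ⊕ Option (Fin k) :=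
  Sum.inr (some i)

/-- The extension of a set `C` of vertices of `G` by all the new leaves of `appendStar G v k`.
It is an identifying code whenever `C` is one and `2 ≤ k`. -/
def extendCode (k : ℕ) (C : Set V) : Set (V ⊕ Option (Fin k)) :=
  Sum.inl '' C ∪ Set.range leaf

theorem preimage_inl_extendCode (C : Set V) : Sum.inl ⁻¹' extendCode k C = C := by
  ext x
  simp [extendCode]

theorem leaf_mem_extendCode (C : Set V) (i : Fin k) : leaf i ∈ extendCode k C :=
  Or.inr ⟨i, rfl⟩

theorem preimage_leaf_inter_extendCode (S : Set (V ⊕ Option (Fin k))) (C : Set V) :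
    leaf ⁻¹' (S ∩ extendCode k C) = leaf ⁻¹' S :=
  Set.ext fun i => and_iff_left (leaf_mem_extendCode C i)

theorem ncard_extendCode {C : Set V} (hC : C.Finite) : (extendCode k C).ncard = C.ncard + k := by
  have leaf_injective : Function.Injective (leaf : Fin k → V ⊕ Option (Fin k)) :=
    Sum.inr_injective.comp (Option.some_injective _)
  have hdisj : Disjoint (Sum.inl '' C) (Set.range (leaf : Fin k → V ⊕ Option (Fin k))) := by
    simp [Set.disjoint_left]
  rw [extendCode, Set.ncard_union_eq hdisj (hC.image _) (Set.finite_range _),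
    Set.ncard_image_of_injective _ Sum.inl_injective, Set.ncard_range_of_injective leaf_injective,
    Nat.card_fin]

variable (G : SimpleGraph V) (v : V)

theorem adj_inl_inl {x y : V} :
    (appendStar G v k).Adj (Sum.inl x) (Sum.inl y) ↔ G.Adj x y := by
  have hne : G.Adj x y → x ≠ y := SimpleGraph.Adj.ne
  simpa [appendStar, G.adj_comm y x] using hne

theorem preimage_inl_closedNbhd_inl (x : V) :
    Sum.inl ⁻¹' closedNbhd (appendStar G v k) (Sum.inl x) = closedNbhd G x := by
  ext y
  simp only [Set.mem_preimage, mem_closedNbhd, Sum.inl.injEq, adj_inl_inl]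

theorem preimage_leaf_closedNbhd_inl (x : V) :
    leaf ⁻¹' closedNbhd (appendStar G v k) (Sum.inl x) = ∅ := by
  ext i
  simp [mem_closedNbhd, appendStar]

theorem preimage_leaf_closedNbhd_center :
    leaf ⁻¹' closedNbhd (appendStar G v k) (Sum.inr none) = Set.univ := by
  ext i
  simp [mem_closedNbhd, appendStar]

theorem preimage_leaf_closedNbhd_leaf (i : Fin k) :
    leaf ⁻¹' closedNbhd (appendStar G v k) (leaf i) = {i} := by
  ext j
  simp [mem_closedNbhd, appendStar]

variable {G v} {C : Set V}

theorem preimage_inl_closedNbhd_inl_inter_extendCode (x : V) :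
    Sum.inl ⁻¹' (closedNbhd (appendStar G v k) (Sum.inl x) ∩ extendCode k C) =
      closedNbhd G x ∩ C := by
  rw [Set.preimage_inter, preimage_inl_closedNbhd_inl, preimage_inl_extendCode]

theorem isDomSet_extendCode (hk : 0 < k) (hC : IsDomSet G C) :
    IsDomSet (appendStar G v k) (extendCode k C) := by
  rintro (x | _ | i)
  · obtain ⟨y, hy⟩ := hC x
    rw [← preimage_inl_closedNbhd_inl_inter_extendCode (k := k) (v := v)] at hy
    exact ⟨Sum.inl y, hy⟩
  · have hmem : ⟨0, hk⟩ ∈ leaf ⁻¹' closedNbhd (appendStar G v k) (Sum.inr none) :=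
      preimage_leaf_closedNbhd_center G v ▸ Set.mem_univ _
    exact ⟨_, hmem, leaf_mem_extendCode C _⟩
  · exact ⟨leaf i, Set.mem_insert .., leaf_mem_extendCode C i⟩

theorem injective_closedNbhd_inter_extendCode (hk : 2 ≤ k)
    (hC : Function.Injective fun x => closedNbhd G x ∩ C) :
    Function.Injective fun a => closedNbhd (appendStar G v k) a ∩ extendCode k C := by
  have : Nontrivial (Fin k) := Fin.nontrivial_iff_two_le.2 hk
  intro a b h
  have hleaf : leaf ⁻¹' closedNbhd (appendStar G v k) a =
      leaf ⁻¹' closedNbhd (appendStar G v k) b := by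
    simpa only [preimage_leaf_inter_extendCode] using congrArg (leaf ⁻¹' ·) h
  rcases a with x | _ | i <;> rcases b with y | _ | j <;>
    simp only [preimage_leaf_closedNbhd_inl, preimage_leaf_closedNbhd_center,
      preimage_leaf_closedNbhd_leaf] at hleaf
  · have hinl : closedNbhd G x ∩ C = closedNbhd G y ∩ C := by
      simpa only [preimage_inl_closedNbhd_inl_inter_extendCode] using congrArg (Sum.inl ⁻¹' ·) h
    exact congrArg Sum.inl (hC hinl)
  · exact (Set.empty_ne_univ hleaf).elim
  · exact (Set.singleton_ne_empty j hleaf.symm).elim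
  · exact (Set.empty_ne_univ hleaf.symm).elim
  · rfl
  · exact (Set.nontrivial_univ.ne_singleton hleaf).elim
  · exact (Set.singleton_ne_empty i hleaf).elim
  · exact (Set.nontrivial_univ.ne_singleton hleaf.symm).elim
  · exact congrArg leaf (Set.singleton_injective hleaf)

theorem isIDCode_extendCode (hk : 2 ≤ k) (hC : IsIDCode G C) :
    IsIDCode (appendStar G v k) (extendCode k C) := by
  rw [isIDCode_iff_isDomSet_and_injective] at hC ⊢
  exact ⟨isDomSet_extendCode (by lia) hC.1, injective_closedNbhd_inter_extendCode hk hC.2⟩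

end appendStar

/-- appending a `Δ`-star (`Δ ≥ 3`), by one of its leaves, onto a vertex
`v` of an identifiable graph `G'` yields an identifiable graph `G` with
`γ^ID(G) ≤ γ^ID(G') + Δ − 1`. -/
theorem stmt_5 {V : Type*} [Fintype V] (G' : SimpleGraph V) (hG' : Identifiable G')
    (v : V) (Δ : ℕ) (hΔ : 3 ≤ Δ) :
    Identifiable (appendStar G' v (Δ - 1)) ∧
    idNum (appendStar G' v (Δ - 1)) ≤ idNum G' + (Δ - 1) := by
  obtain ⟨C, hC, hcard⟩ := hG'.exists_isIDCode_ncard_eq_idNum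
  have hcode : IsIDCode (appendStar G' v (Δ - 1)) (appendStar.extendCode (Δ - 1) C) :=
    appendStar.isIDCode_extendCode (by lia) hC
  refine ⟨hcode.identifiable, ?_⟩
  calc idNum (appendStar G' v (Δ - 1))
    _ ≤ (appendStar.extendCode (Δ - 1) C).ncard := hcode.idNum_le_ncard
    _ = C.ncard + (Δ - 1) := appendStar.ncard_extendCode C.toFinite
    _ = idNum G' + (Δ - 1) := by rw [hcard]
end

section
/- Let T_3 be the tree on the 10 vertices {w, x, y, z, u₁, a₁, b₁, u₂, a₂, b₂} with edges wx, xy, yz, zu₁, u₁a₁, u₁b₁, zu₂, u₂a₂, u₂b₂ (a path on 4 vertices with two 3-stars each appended by a leaf onto the endpoint z). Then γ^ID(T_3) = 7 = (2/3)·10 + 1/3. -/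
open SimpleGraph

/-- The tree `T₃`: a path `w x y z` (vertices `0 1 2 3`) with two 3-stars appended by
a leaf each onto `z`; `u₁ = 4`, `a₁ = 5`, `b₁ = 6`, `u₂ = 7`, `a₂ = 8`, `b₂ = 9`. -/
def T3graph : SimpleGraph (Fin 10) :=
  SimpleGraph.fromEdgeSet
    {s(0, 1), s(1, 2), s(2, 3), s(3, 4), s(4, 5), s(4, 6), s(3, 7), s(7, 8), s(7, 9)}

/-! Let `C` be an identifying code of `T₃`. Each of the disjoint blocks `{w, x, y}`,
`{u₁, a₁, b₁}`, `{u₂, a₂, b₂}` contains at least two vertices of `C`, and `z` lies in none of them.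
So `z ∈ C` gives a seventh vertex. If `z ∉ C`, separating `x` from `w` and from `y` puts `y` and `w`
in `C`, and separating `uᵢ` from `aᵢ` and from `bᵢ` puts `bᵢ` and `aᵢ` in `C`. Separating `y` from
`z` then requires one of `x`, `u₁`, `u₂`, which completes its block and is the seventh vertex. -/

namespace IsIDCode

variable {V : Type*} {G : SimpleGraph V} {C : Set V} {a b u v w x y z : V}

theorem mem_or_mem_of_leaf (hC : IsIDCode G C) (ha : G.neighborSet a = {u}) : a ∈ C ∨ u ∈ C := by
  obtain ⟨c, hca, hcC⟩ := hC.1 a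
  rw [closedNbhd, ha] at hca
  obtain rfl | rfl := hca
  · exact .inl hcC
  · exact .inr hcC

theorem exists_mem_symmDiff (hC : IsIDCode G C) (huv : u ≠ v) :
    ∃ c ∈ C, c ∈ symmDiff (closedNbhd G u) (closedNbhd G v) := by
  have hne := hC.2 u v huv
  rw [← Set.symmDiff_nonempty, ← Set.inter_symmDiff_distrib_right] at hne
  obtain ⟨c, hc, hcC⟩ := hne
  exact ⟨c, hcC, hc⟩

theorem mem_or_mem_of_two_leaves (hC : IsIDCode G C) (ha : G.neighborSet a = {u})
    (hb : G.neighborSet b = {u}) (hab : a ≠ b) : a ∈ C ∨ b ∈ C := by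
  obtain ⟨c, hcC, hc⟩ := hC.exists_mem_symmDiff hab
  simp only [closedNbhd, ha, hb, Set.mem_symmDiff, Set.mem_insert_iff] at hc
  obtain ⟨rfl | hc, hnot⟩ | ⟨rfl | hc, hnot⟩ := hc
  · exact .inl hcC
  · exact absurd (.inr hc) hnot
  · exact .inr hcC
  · exact absurd (.inr hc) hnot

theorem exists_mem_of_adj (hC : IsIDCode G C) (huv : G.Adj u v) :
    ∃ c ∈ C, c ≠ u ∧ c ≠ v ∧ ¬(G.Adj u c ↔ G.Adj v c) := by
  obtain ⟨c, hcC, hc⟩ := hC.exists_mem_symmDiff huv.ne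
  simp only [closedNbhd, Set.mem_symmDiff, Set.mem_insert_iff, mem_neighborSet] at hc
  have hcu : c ≠ u := by
    rintro rfl
    simp [huv.symm] at hc
  have hcv : c ≠ v := by
    rintro rfl
    simp [huv] at hc
  exact ⟨c, hcC, hcu, hcv, by tauto⟩

theorem exists_mem_adj_of_leaf (hC : IsIDCode G C) (ha : G.neighborSet a = {u}) :
    ∃ c ∈ C, G.Adj u c ∧ c ≠ a := by
  have hadj (c : V) : G.Adj a c ↔ c = u := Set.ext_iff.mp ha c
  obtain ⟨c, hcC, hca, hcu, hc⟩ := hC.exists_mem_of_adj ((hadj u).mpr rfl)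
  exact ⟨c, hcC, by simpa [hadj, hcu] using hc, hca⟩

theorem encard_leaves_le (hC : IsIDCode G C) {L : Set V} (hL : ∀ a ∈ L, G.neighborSet a = {u}) :
    L.encard ≤ (C ∩ insert u L).encard := by
  by_cases hLC : L ⊆ C
  · exact Set.encard_le_encard (Set.subset_inter hLC (Set.subset_insert u L))
  obtain ⟨a, haL, haC⟩ := Set.not_subset.mp hLC
  have huC : u ∈ C := (hC.mem_or_mem_of_leaf (hL a haL)).resolve_left haC
  have huL : u ∉ L := fun hu ↦ G.irrefl (Set.ext_iff.mp (hL u hu) u |>.mpr rfl)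
  have hrest : L \ {a} ⊆ C := fun b ⟨hbL, hba⟩ ↦
    (hC.mem_or_mem_of_two_leaves (hL b hbL) (hL a haL) hba).resolve_right haC
  calc L.encard = (insert u (L \ {a})).encard := by
        rw [Set.encard_insert_of_notMem fun hu ↦ huL hu.1, Set.encard_sdiff_singleton_add_one haL]
    _ ≤ (C ∩ insert u L).encard := Set.encard_le_encard <| Set.subset_inter
        (Set.insert_subset huC hrest) (Set.insert_subset_insert Set.sdiff_subset)

theorem mem_of_leaf (hC : IsIDCode G C) (hb : G.neighborSet b = {u})
    (hu : G.neighborSet u ∩ C ⊆ {a, b}) : a ∈ C := by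
  obtain ⟨c, hcC, huc, hcb⟩ := hC.exists_mem_adj_of_leaf hb
  obtain rfl | rfl := hu ⟨huc, hcC⟩
  · exact hcC
  · contradiction

theorem mem_of_pendant_path (hC : IsIDCode G C) (hw : G.neighborSet w = {x})
    (hx : G.neighborSet x = {w, y}) : y ∈ C :=
  hC.mem_of_leaf hw (by rw [hx, Set.pair_comm]; exact Set.inter_subset_left)

theorem pendant_claw_subset (hC : IsIDCode G C) (ha : G.neighborSet a = {u})
    (hb : G.neighborSet b = {u}) (hu : G.neighborSet u = {z, a, b}) (hz : z ∉ C) (huC : u ∈ C) :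
    {u, a, b} ⊆ C := by
  have hleaves : G.neighborSet u ∩ C ⊆ {a, b} := by
    rw [hu, Set.insert_inter_of_notMem hz]
    exact Set.inter_subset_left
  have haC : a ∈ C := hC.mem_of_leaf hb hleaves
  have hbC : b ∈ C := hC.mem_of_leaf ha (Set.pair_comm a b ▸ hleaves)
  exact Set.insert_subset huC (Set.pair_subset haC hbC)

theorem two_le_encard_pendant_claw (hC : IsIDCode G C) (ha : G.neighborSet a = {u})
    (hb : G.neighborSet b = {u}) (hab : a ≠ b) : 2 ≤ (C ∩ {u, a, b}).encard := by
  rw [← Set.encard_pair hab]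
  exact hC.encard_leaves_le (by rintro _ (rfl | rfl) <;> assumption)

theorem two_le_encard_pendant_path (hC : IsIDCode G C) (hw : G.neighborSet w = {x})
    (hx : G.neighborSet x = {w, y}) : 2 ≤ (C ∩ {w, x, y}).encard := by
  have hyC : y ∈ C := hC.mem_of_pendant_path hw hx
  have hxy : G.Adj x y := Set.ext_iff.mp hx y |>.mpr (by simp)
  have hwy : w ≠ y := by
    rintro rfl
    obtain ⟨c, -, hxc, hcw⟩ := hC.exists_mem_adj_of_leaf hw
    rw [← mem_neighborSet, hx, Set.pair_eq_singleton] at hxc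
    exact hcw hxc
  obtain hwC | hxC := hC.mem_or_mem_of_leaf hw
  · rw [← Set.encard_pair hwy]
    exact Set.encard_le_encard (by grind)
  · rw [← Set.encard_pair hxy.ne]
    exact Set.encard_le_encard (by grind)

end IsIDCode

theorem isIDCode_coe_iff {V : Type*} [Fintype V] [DecidableEq V] {G : SimpleGraph V}
    [DecidableRel G.Adj] {C : Finset V} :
    IsIDCode G C ↔ (∀ v, (insert v (G.neighborFinset v) ∩ C).Nonempty) ∧
      ∀ u w, u ≠ w → insert u (G.neighborFinset u) ∩ C ≠ insert w (G.neighborFinset w) ∩ C := by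
  simp only [IsIDCode, closedNbhd, ← coe_neighborFinset, ← Finset.coe_insert, ← Finset.coe_inter,
    Finset.coe_nonempty, ne_eq, Finset.coe_inj]

theorem three_le_encard_inter {V : Type*} {C : Set V} {a b c : V} (hab : a ≠ b) (hac : a ≠ c)
    (hbc : b ≠ c) (h : {a, b, c} ⊆ C) : 3 ≤ (C ∩ {a, b, c}).encard := by
  rw [Set.inter_eq_self_of_subset_right h]
  exact (Set.encard_eq_three.mpr ⟨a, b, c, hab, hac, hbc, rfl⟩).ge

namespace T3graph

instance : DecidableRel T3graph.Adj :=
  inferInstanceAs (DecidableRel (SimpleGraph.fromEdgeSet _).Adj)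

theorem neighborSet_eq (v : Fin 10) :
    T3graph.neighborSet v =
      (![{1}, {0, 2}, {1, 3}, {2, 4, 7}, {3, 5, 6}, {4}, {4}, {3, 8, 9}, {7}, {7}] :
        Fin 10 → Set (Fin 10)) v := by
  ext c
  fin_cases v <;> simp only [Fin.reduceFinMk, Matrix.cons_val] <;> revert c <;> decide

theorem encard_eq_add (C : Set (Fin 10)) :
    C.encard = (C ∩ {0, 1, 2}).encard + (C ∩ {3}).encard + (C ∩ {4, 5, 6}).encard +
      (C ∩ {7, 8, 9}).encard := by
  have hcover : ({0, 1, 2} ∪ {3} ∪ {4, 5, 6} ∪ {7, 8, 9} : Set (Fin 10)) = Set.univ := by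
    ext v
    revert v
    decide
  rw [← Set.encard_union_eq, ← Set.encard_union_eq, ← Set.encard_union_eq,
    ← Set.inter_union_distrib_left, ← Set.inter_union_distrib_left,
    ← Set.inter_union_distrib_left, hcover, Set.inter_univ]
  all_goals exact Set.disjoint_left.mpr (by grind)

variable {C : Set (Fin 10)}

theorem mem_or_block_subset (hC : IsIDCode T3graph C) :
    3 ∈ C ∨ {0, 1, 2} ⊆ C ∨ {4, 5, 6} ⊆ C ∨ {7, 8, 9} ⊆ C := by
  by_cases hz : 3 ∈ C
  · exact .inl hz
  right
  have hy : 2 ∈ C := hC.mem_of_pendant_path (neighborSet_eq 0) (neighborSet_eq 1)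
  have hw : 0 ∈ C := by
    obtain ⟨c, hcC, hc⟩ := hC.exists_mem_of_adj (show T3graph.Adj 1 2 by decide)
    obtain rfl | rfl : c = 0 ∨ c = 3 := by clear hcC; revert c; decide
    · exact hcC
    · contradiction
  obtain ⟨c, hcC, hc⟩ := hC.exists_mem_of_adj (show T3graph.Adj 2 3 by decide)
  obtain rfl | rfl | rfl : c = 1 ∨ c = 4 ∨ c = 7 := by clear hcC; revert c; decide
  · exact .inl (Set.insert_subset hw (Set.pair_subset hcC hy))
  · exact .inr <| .inl <| hC.pendant_claw_subset (neighborSet_eq 5) (neighborSet_eq 6)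
      (neighborSet_eq 4) hz hcC
  · exact .inr <| .inr <| hC.pendant_claw_subset (neighborSet_eq 8) (neighborSet_eq 9)
      (neighborSet_eq 7) hz hcC

theorem seven_le_encard (hC : IsIDCode T3graph C) : 7 ≤ C.encard := by
  have hpath : 2 ≤ (C ∩ {0, 1, 2}).encard :=
    hC.two_le_encard_pendant_path (neighborSet_eq 0) (neighborSet_eq 1)
  have hclaw₁ : 2 ≤ (C ∩ {4, 5, 6}).encard :=
    hC.two_le_encard_pendant_claw (neighborSet_eq 5) (neighborSet_eq 6) (by decide)
  have hclaw₂ : 2 ≤ (C ∩ {7, 8, 9}).encard :=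
    hC.two_le_encard_pendant_claw (neighborSet_eq 8) (neighborSet_eq 9) (by decide)
  rw [encard_eq_add C]
  obtain h | h | h | h := mem_or_block_subset hC
  · have hz : 1 ≤ (C ∩ {3}).encard := Set.one_le_encard_iff_nonempty.mpr ⟨3, h, rfl⟩
    calc (7 : ℕ∞) = 2 + 1 + 2 + 2 := by norm_num
      _ ≤ _ := by gcongr
  · have hpath' := three_le_encard_inter (by decide) (by decide) (by decide) h
    calc (7 : ℕ∞) = 3 + 0 + 2 + 2 := by norm_num
      _ ≤ _ := by gcongr; exact zero_le
  · have hclaw₁' := three_le_encard_inter (by decide) (by decide) (by decide) h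
    calc (7 : ℕ∞) = 2 + 0 + 3 + 2 := by norm_num
      _ ≤ _ := by gcongr; exact zero_le
  · have hclaw₂' := three_le_encard_inter (by decide) (by decide) (by decide) h
    calc (7 : ℕ∞) = 2 + 0 + 2 + 3 := by norm_num
      _ ≤ _ := by gcongr; exact zero_le

theorem isIDCode_path_union_leaves :
    IsIDCode T3graph (({0, 1, 2, 5, 6, 8, 9} : Finset (Fin 10)) : Set (Fin 10)) := by
  rw [isIDCode_coe_iff]
  decide

end T3graph

/-- `γ^ID(T₃) = 7 = (2/3)·10 + 1/3`. -/
theorem stmt_8 : idNum T3graph = 7 ∧ (idNum T3graph : ℝ) = 2 / 3 * 10 + 1 / 3 := by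
  have hleast : IsLeast {k | ∃ C : Set (Fin 10), C.ncard = k ∧ IsIDCode T3graph C} 7 := by
    refine ⟨⟨_, Set.ncard_coe_finset _, T3graph.isIDCode_path_union_leaves⟩, ?_⟩
    rintro _ ⟨C, rfl, hC⟩
    have hseven := T3graph.seven_le_encard hC
    rw [← C.toFinite.cast_ncard_eq] at hseven
    exact_mod_cast hseven
  have hidNum : idNum T3graph = 7 := hleast.csInf_eq
  refine ⟨hidNum, ?_⟩
  rw [hidNum]
  norm_num
end
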